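/- arXiv:2009.08967 — 6 statements merged into one kernel-verified Lean document; each statement's English description precedes it below -/
import Mathlib

section
/- Fix a natural number n ≥ 2 and, for every nonempty subset F of {1,...,n}, a real number δ_F > 0. For every η > 0 there exists a positive integer d = d(n, (δ_F), η) such that for every finite d-quasirandom group G and every family of subsets A_F ⊆ G with |A_F| ≥ δ_F·|G| for each nonempty F ⊆ {1,...,n}, the set X_n = {(a_1,...,a_n) ∈ G^n : a_F ∈ A_F for all nonempty F ⊆ {1,...,n}} satisfies |X_n| ≥ (1−η)·(∏_F |A_F|)/|G|^{2^n−1−n}. -/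
/-- A group `G` is `d`-quasirandom if every non-trivial finite-dimensional complex
representation of `G` has degree at least `d`. -/
def IsQuasirandom (G : Type*) [Group G] (d : ℕ) : Prop :=
  ∀ (V : Type) [AddCommGroup V] [Module ℂ V] [FiniteDimensional ℂ V],
    ∀ ρ : G →* LinearMap.GeneralLinearGroup ℂ V, ρ ≠ 1 → d ≤ Module.finrank ℂ V

/-- The product of the `a i` with `i ∈ F`, taken with indices in increasing order. -/
def prodF {G : Type*} [Monoid G] {n : ℕ} (a : Fin n → G) (F : Finset (Fin n)) : G :=
  ((F.sort (· ≤ ·)).map a).prod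

noncomputable def opK {G : Type} [Group G] [Fintype G] (g : G → ℝ) :
    EuclideanSpace ℂ G →ₗ[ℂ] EuclideanSpace ℂ G where
  toFun v := WithLp.toLp 2 fun x => ∑ y, (g (x * y) : ℂ) * v y
  map_add' u v := by
    ext x; simp [mul_add, Finset.sum_add_distrib]
  map_smul' c v := by
    ext x; simp [Finset.mul_sum, mul_left_comm]

noncomputable def opKt {G : Type} [Group G] [Fintype G] (g : G → ℝ) :
    EuclideanSpace ℂ G →ₗ[ℂ] EuclideanSpace ℂ G where
  toFun v := WithLp.toLp 2 fun y => ∑ x, (g (x * y) : ℂ) * v x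
  map_add' u v := by
    ext x; simp [mul_add, Finset.sum_add_distrib]
  map_smul' c v := by
    ext x; simp [Finset.mul_sum, mul_left_comm]

noncomputable def opL {G : Type} [Group G] [Fintype G] :
    G →* (EuclideanSpace ℂ G →ₗ[ℂ] EuclideanSpace ℂ G) where
  toFun h :=
    { toFun := fun v => WithLp.toLp 2 fun y => v (h⁻¹ * y)
      map_add' := fun u v => by ext x; simp
      map_smul' := fun c v => by ext x; simp }
  map_one' := by ext v x; simp
  map_mul' h k := by ext v x; simp [mul_assoc]

lemma opK_apply {G : Type} [Group G] [Fintype G] (g : G → ℝ) (v : EuclideanSpace ℂ G) (x : G) :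
    opK g v x = ∑ y, (g (x * y) : ℂ) * v y := rfl
lemma opKt_apply {G : Type} [Group G] [Fintype G] (g : G → ℝ) (v : EuclideanSpace ℂ G) (x : G) :
    opKt g v x = ∑ y, (g (y * x) : ℂ) * v y := rfl
lemma opL_apply {G : Type} [Group G] [Fintype G] (h : G) (v : EuclideanSpace ℂ G) (x : G) :
    opL h v x = v (h⁻¹ * x) := rfl

lemma opK_adj {G : Type} [Group G] [Fintype G] (g : G → ℝ) (u v : EuclideanSpace ℂ G) :
    inner ℂ (opK g u) v = inner ℂ u (opKt g v) := by
  simp only [PiLp.inner_apply, opK_apply, opKt_apply, RCLike.inner_apply, map_sum, map_mul,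
    Complex.conj_ofReal, Finset.mul_sum, Finset.sum_mul]
  rw [Finset.sum_comm]
  refine Finset.sum_congr rfl fun x _ => Finset.sum_congr rfl fun y _ => ?_
  ring

noncomputable def opT {G : Type} [Group G] [Fintype G] (g : G → ℝ) :
    EuclideanSpace ℂ G →ₗ[ℂ] EuclideanSpace ℂ G := opKt g ∘ₗ opK g

lemma opT_inner {G : Type} [Group G] [Fintype G] (g : G → ℝ) (u v : EuclideanSpace ℂ G) :
    inner ℂ u (opT g v) = inner ℂ (opK g u) (opK g v) := by
  rw [opK_adj]; rfl

lemma opT_symm {G : Type} [Group G] [Fintype G] (g : G → ℝ) : (opT g).IsSymmetric := by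
  intro u v
  rw [opT_inner, ← inner_conj_symm, opT_inner, inner_conj_symm]

lemma opT_comm {G : Type} [Group G] [Fintype G] (g : G → ℝ) (h : G) (v : EuclideanSpace ℂ G) :
    opT g (opL h v) = opL h (opT g v) := by
  have h1 : ∀ x, opK g (opL h v) x = opK g v (x * h) := by
    intro x
    simp only [opK_apply, opL_apply]
    rw [← Equiv.sum_comp (Equiv.mulLeft h)]
    simp [mul_assoc]
  ext y
  simp only [opT, LinearMap.comp_apply, opL_apply]
  rw [opKt_apply, opKt_apply]
  conv_rhs => rw [← Equiv.sum_comp (Equiv.mulRight h)]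
  simp [h1, mul_assoc]

lemma opT_sum {G : Type} [Group G] [Fintype G] (g : G → ℝ) (hg : ∑ x, g x = 0)
    (v : EuclideanSpace ℂ G) : ∑ y, opT g v y = 0 := by
  simp only [opT, LinearMap.comp_apply, opKt_apply]
  rw [Finset.sum_comm]
  refine Finset.sum_eq_zero fun x _ => ?_
  rw [← Finset.sum_mul]
  have := Equiv.sum_comp (Equiv.mulLeft x) g
  simp only [Equiv.coe_mulLeft] at this
  rw [← Complex.ofReal_sum, this, hg]; simp

open Module.End in
lemma eig_dim {G : Type} [Group G] [Fintype G] {d : ℕ} (hq : IsQuasirandom G d)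
    (g : G → ℝ) (hg : ∑ x, g x = 0) (μ : ℂ) (hμ : μ ≠ 0) (v : EuclideanSpace ℂ G)
    (hv : v ≠ 0) (hTv : opT g v = μ • v) :
    d ≤ Module.finrank ℂ (eigenspace (opT g) μ) := by
  have hinv : ∀ h : G, ∀ w ∈ eigenspace (opT g) μ, opL h w ∈ eigenspace (opT g) μ := by
    intro h w hw
    rw [mem_eigenspace_iff] at hw ⊢
    rw [opT_comm, hw, map_smul]
  let ρ0 : G →* ((eigenspace (opT g) μ) →ₗ[ℂ] (eigenspace (opT g) μ)) :=
    { toFun := fun h => (opL h).restrict (hinv h)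
      map_one' := by ext w : 2; simp [LinearMap.restrict_apply]
      map_mul' := fun h k => by ext w : 2; simp [LinearMap.restrict_apply] }
  refine hq _ ρ0.toHomUnits fun hρ => hv ?_
  have hvm : v ∈ eigenspace (opT g) μ := by rwa [mem_eigenspace_iff]
  have hfix : ∀ h : G, opL h v = v := by
    intro h
    have h1 := DFunLike.congr_fun hρ h
    have h2 : ρ0 h = 1 := congrArg Units.val h1
    have h3 := congrArg Subtype.val (LinearMap.congr_fun h2 ⟨v, hvm⟩)
    exact h3
  have hconst : ∀ x, v x = v 1 := by
    intro x
    have := congrArg (fun w : EuclideanSpace ℂ G => w x) (hfix x)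
    simp only [opL_apply] at this
    rw [← this]; simp
  have hs := opT_sum g hg v
  rw [hTv] at hs
  simp only [PiLp.smul_apply, smul_eq_mul, ← Finset.mul_sum] at hs
  have hs2 := (mul_eq_zero.mp hs).resolve_left hμ
  rw [Finset.sum_congr rfl fun x _ => hconst x] at hs2
  simp at hs2
  ext x
  rw [hconst, hs2]; rfl

open Module.End in
lemma eig_bound {G : Type} [Group G] [Fintype G] (g : G → ℝ) (μ : ℝ)  :
    Module.finrank ℂ (eigenspace (opT g) (μ : ℂ)) * μ ≤ Fintype.card G * ∑ x, g x ^ 2 := by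
  set W := eigenspace (opT g) (μ : ℂ) with hW
  let w := stdOrthonormalBasis ℂ W
  let ww : Fin (Module.finrank ℂ W) → EuclideanSpace ℂ G := fun j => (w j : EuclideanSpace ℂ G)
  have ho : Orthonormal ℂ ww := w.orthonormal.comp_linearIsometry W.subtypeₗᵢ
  have hK : ∀ j, ‖opK g (ww j)‖ ^ 2 = μ := by
    intro j
    have h1 : opT g (ww j) = (μ : ℂ) • ww j := mem_eigenspace_iff.mp (w j).2
    have h2 := opT_inner g (ww j) (ww j)
    rw [h1, inner_smul_right, inner_self_eq_norm_sq_to_K, inner_self_eq_norm_sq_to_K, ho.1 j] at h2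
    have h3 : (μ : ℂ) = ((‖opK g (ww j)‖ ^ 2 : ℝ) : ℂ) := by simpa using h2
    exact (Complex.ofReal_injective h3).symm
  let t : G → EuclideanSpace ℂ G := fun x => WithLp.toLp 2 fun y => (g (x * y) : ℂ)
  have ht : ∀ x, ‖t x‖ ^ 2 = ∑ y, g y ^ 2 := by
    intro x
    rw [EuclideanSpace.norm_sq_eq, ← Equiv.sum_comp (Equiv.mulLeft x) (fun y => g y ^ 2)]
    simp [t]
  have hin : ∀ j x, ‖opK g (ww j) x‖ = ‖inner ℂ (ww j) (t x)‖ := by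
    intro j x
    rw [norm_inner_symm]
    congr 1
    simp only [PiLp.inner_apply, opK_apply, RCLike.inner_apply, t, Complex.conj_ofReal, mul_comm]
  calc (Module.finrank ℂ W : ℝ) * μ = ∑ j, ‖opK g (ww j)‖ ^ 2 := by simp [hK]
    _ = ∑ j, ∑ x, ‖inner ℂ (ww j) (t x)‖ ^ 2 := by
        refine Finset.sum_congr rfl fun j _ => ?_
        rw [EuclideanSpace.norm_sq_eq]
        simp [hin]
    _ = ∑ x, ∑ j, ‖inner ℂ (ww j) (t x)‖ ^ 2 := Finset.sum_comm
    _ ≤ ∑ x, ‖t x‖ ^ 2 := Finset.sum_le_sum fun x _ => ho.sum_inner_products_le (t x)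
    _ = _ := by simp [ht]

lemma mixing {G : Type} [Group G] [Fintype G] {d : ℕ} (hq : IsQuasirandom G d)
    (g : G → ℝ) (hg : ∑ x, g x = 0) (f : G → ℝ) :
    d * ∑ x, (∑ y, g (x * y) * f y) ^ 2 ≤
      Fintype.card G * (∑ x, g x ^ 2) * ∑ x, f x ^ 2 := by
  have hT := opT_symm g
  let b := hT.eigenvectorBasis rfl
  let lam := hT.eigenvalues rfl
  have hb : ∀ i, opT g (b i) = (lam i : ℂ) • b i := fun i => hT.apply_eigenvectorBasis rfl i
  set C : ℝ := Fintype.card G * ∑ x, g x ^ 2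
  have hC : 0 ≤ C := by positivity
  have hlam : ∀ i, d * lam i ≤ C := by
    intro i
    rcases le_or_gt (lam i) 0 with h | h
    · exact (mul_nonpos_of_nonneg_of_nonpos (by positivity) h).trans hC
    · have h1 := eig_dim hq g hg (lam i : ℂ) (by exact_mod_cast h.ne') (b i)
        (b.orthonormal.ne_zero i) (hb i)
      refine le_trans ?_ (eig_bound g (lam i))
      gcongr
  let v : EuclideanSpace ℂ G := WithLp.toLp 2 fun y => (f y : ℂ)
  have hv : ‖v‖ ^ 2 = ∑ x, f x ^ 2 := by
    rw [EuclideanSpace.norm_sq_eq]; simp [v]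
  have hKv : ‖opK g v‖ ^ 2 = ∑ x, (∑ y, g (x * y) * f y) ^ 2 := by
    rw [EuclideanSpace.norm_sq_eq]
    refine Finset.sum_congr rfl fun x _ => ?_
    have : opK g v x = ((∑ y, g (x * y) * f y : ℝ) : ℂ) := by
      simp [opK_apply, v]
    rw [this, Complex.norm_real]; simp
  have hexp : ‖opK g v‖ ^ 2 = ∑ i, lam i * ‖inner ℂ (b i) v‖ ^ 2 := by
    have h1 := opT_inner g v v
    rw [inner_self_eq_norm_sq_to_K, ← b.sum_inner_mul_inner] at h1
    have h2 : ((‖opK g v‖ ^ 2 : ℝ) : ℂ) = ((∑ i, lam i * ‖inner ℂ (b i) v‖ ^ 2 : ℝ) : ℂ) := by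
      have h3 : ((‖opK g v‖ ^ 2 : ℝ) : ℂ) = ∑ i, inner ℂ v (b i) * inner ℂ (b i) (opT g v) := by
        rw [h1]; simp
      rw [h3, Complex.ofReal_sum]
      refine Finset.sum_congr rfl fun i _ => ?_
      rw [← hT, hb, inner_smul_left, Complex.conj_ofReal, mul_left_comm,
        ← inner_conj_symm v (b i), RCLike.conj_mul]
      simp
    exact Complex.ofReal_injective h2
  have hpars : ∑ i, ‖inner ℂ (b i) v‖ ^ 2 = ‖v‖ ^ 2 := b.sum_sq_norm_inner_right v
  rw [← hKv, ← hv, hexp, ← hpars, Finset.mul_sum, Finset.mul_sum]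
  refine Finset.sum_le_sum fun i _ => ?_
  rw [← mul_assoc]
  exact mul_le_mul_of_nonneg_right (hlam i) (by positivity)

/-- lift of a subset avoiding `0` -/
def up {n : ℕ} (F : Finset (Fin n)) : Finset (Fin (n + 1)) := F.map (Fin.succEmb n)

lemma zero_notMem_up {n : ℕ} (F : Finset (Fin n)) : (0 : Fin (n + 1)) ∉ up F := by
  simp [up, Fin.succ_ne_zero]

lemma up_nonempty {n : ℕ} (F : Finset (Fin n)) : (up F).Nonempty ↔ F.Nonempty := by simp [up]

lemma prodF_up {G : Type*} [Monoid G] {n : ℕ} (x : G) (a : Fin n → G) (F : Finset (Fin n)) :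
    prodF (Fin.cons x a) (up F) = prodF a F := by
  unfold prodF up
  have h := Finset.map_sort (r := (· ≤ ·)) (r' := (· ≤ ·)) (Fin.succEmb n) F (by simp)
  rw [← h, List.map_map]
  congr 1

lemma prodF_insert {G : Type*} [Monoid G] {n : ℕ} (x : G) (a : Fin n → G)
    (F : Finset (Fin n)) :
    prodF (Fin.cons x a) (insert 0 (up F)) = x * prodF a F := by
  rw [← prodF_up x a F]
  unfold prodF
  rw [Finset.sort_insert _ (by simp) (zero_notMem_up F)]
  simp

lemma cases_up {n : ℕ} (E : Finset (Fin (n + 1))) :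
    (∃ F, E = up F) ∨ ∃ F, E = insert 0 (up F) := by
  have key : ∀ E : Finset (Fin (n + 1)), 0 ∉ E → ∃ F, E = up F := by
    intro E hE
    refine ⟨Finset.univ.filter (fun i : Fin n => i.succ ∈ E), ?_⟩
    ext i
    refine Fin.cases ?_ (fun j => ?_) i
    · simp [hE, zero_notMem_up]
    · simp [up]
  by_cases h : 0 ∈ E
  · right
    obtain ⟨F, hF⟩ := key (E.erase 0) (by simp)
    exact ⟨F, by rw [← hF, Finset.insert_erase h]⟩
  · left; exact key E h

lemma prod_split {n : ℕ} (φ : Finset (Fin (n + 1)) → ℝ) :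
    ∏ E, φ E = ∏ F : Finset (Fin n), (φ (up F) * φ (insert 0 (up F))) := by
  rw [Finset.prod_mul_distrib, ← Finset.powerset_univ, Fin.univ_succ, Finset.cons_eq_insert,
    Finset.prod_powerset_insert (by simp [Fin.succ_ne_zero])]
  have h : ∀ ψ : Finset (Fin (n + 1)) → ℝ,
      ∏ t ∈ (Finset.map ⟨Fin.succ, Fin.succ_injective n⟩ Finset.univ).powerset, ψ t
        = ∏ F : Finset (Fin n), ψ (up F) := by
    intro ψ
    symm
    refine Finset.prod_bij (fun F _ => up F) ?_ ?_ ?_ ?_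
    · intro F _
      rw [Finset.mem_powerset]
      exact Finset.map_subset_map.mpr (Finset.subset_univ F)
    · intro F _ F2 _ h
      exact Finset.map_injective _ h
    · intro E hE
      rcases cases_up E with ⟨F, rfl⟩ | ⟨F, rfl⟩
      · exact ⟨F, Finset.mem_univ _, rfl⟩
      · exfalso
        have := Finset.mem_powerset.mp hE (Finset.mem_insert_self _ _)
        simp [Fin.succ_ne_zero] at this
    · intros; rfl
  rw [h, h (fun t => φ (insert 0 t))]

/-- normalised density, with value `1` at the empty set -/
noncomputable def dens {G : Type} [Fintype G] {n : ℕ} (A : Finset (Fin n) → Finset G)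
    (F : Finset (Fin n)) : ℝ := if F.Nonempty then ((A F).card : ℝ) / Fintype.card G else 1

open Classical in
/-- the fibre sets -/
noncomputable def fib {G : Type} [Group G] {n : ℕ}
    (A : Finset (Fin (n + 1)) → Finset G) (x : G) (F : Finset (Fin n)) : Finset G :=
  (A (up F)).filter (fun y => x * y ∈ A (insert 0 (up F)))

open Classical in
lemma bad_card {G : Type} [Group G] [Fintype G] {d : ℕ} (hq : IsQuasirandom G d)
    (A B : Finset G) (δ ε : ℝ) (hδ : 0 < δ) (hε : 0 < ε)
    (hA : δ * Fintype.card G ≤ A.card) (hB : δ * Fintype.card G ≤ B.card) :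
    d * (ε ^ 2 * δ ^ 4) * ((Finset.univ.filter (fun x : G =>
      ((A.filter (fun y => x * y ∈ B)).card : ℝ) <
        (1 - ε) * (A.card * B.card / Fintype.card G))).card : ℝ) ≤ Fintype.card G := by
  set N : ℝ := (Fintype.card G : ℝ) with hN
  have hNpos : 0 < N := by rw [hN]; exact_mod_cast Fintype.card_pos
  set bad := Finset.univ.filter (fun x : G =>
      ((A.filter (fun y => x * y ∈ B)).card : ℝ) <
        (1 - ε) * (A.card * B.card / N)) with hbad
  let β : ℝ := B.card / N
  let g : G → ℝ := fun x => (if x ∈ B then 1 else 0) - β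
  let f : G → ℝ := fun y => if y ∈ A then 1 else 0
  have hBN : (B.card : ℝ) ≤ N := by rw [hN]; exact_mod_cast Finset.card_le_univ B
  have hAN : (A.card : ℝ) ≤ N := by rw [hN]; exact_mod_cast Finset.card_le_univ A
  have hβN : β * N = B.card := by simp only [β]; field_simp
  have hβ0 : 0 ≤ β := by positivity
  have hβ1 : β ≤ 1 := (div_le_one hNpos).mpr hBN
  have hg : ∑ x, g x = 0 := by
    simp only [g, Finset.sum_sub_distrib]
    simp only [Finset.sum_ite_mem, Finset.univ_inter, Finset.sum_const, Finset.card_univ,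
      nsmul_eq_mul, mul_one]
    rw [← hN]; linarith
  have hg2 : ∑ x, g x ^ 2 ≤ N := by
    calc ∑ x, g x ^ 2 ≤ ∑ _x : G, (1 : ℝ) := by
          refine Finset.sum_le_sum fun x _ => ?_
          simp only [g]
          split_ifs <;> nlinarith
      _ = N := by simp [hN]
  have hf2 : ∑ x, f x ^ 2 ≤ N := by
    calc ∑ x, f x ^ 2 ≤ ∑ _x : G, (1 : ℝ) := by
          refine Finset.sum_le_sum fun x _ => ?_
          simp only [f]
          split_ifs <;> norm_num
      _ = N := by simp [hN]
  have hc : ∀ x, ∑ y, g (x * y) * f y =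
      ((A.filter (fun y => x * y ∈ B)).card : ℝ) - A.card * B.card / N := by
    intro x
    have h1 : ∀ y, g (x * y) * f y =
        (if y ∈ A.filter (fun y => x * y ∈ B) then 1 else 0) - β * (if y ∈ A then 1 else 0) := by
      intro y
      simp only [g, f, Finset.mem_filter]
      by_cases h1 : y ∈ A <;> by_cases h2 : x * y ∈ B <;> simp [h1, h2]
    rw [Finset.sum_congr rfl fun y _ => h1 y, Finset.sum_sub_distrib, ← Finset.mul_sum]
    simp only [Finset.sum_ite_mem, Finset.univ_inter, Finset.sum_const, nsmul_eq_mul, mul_one]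
    simp only [β]; ring
  have hm := mixing hq g hg f
  have hlow : (bad.card : ℝ) * (ε * (δ ^ 2 * N)) ^ 2 ≤ ∑ x, (∑ y, g (x * y) * f y) ^ 2 := by
    calc (bad.card : ℝ) * (ε * (δ ^ 2 * N)) ^ 2 = ∑ _x ∈ bad, (ε * (δ ^ 2 * N)) ^ 2 := by simp
      _ ≤ ∑ x ∈ bad, (∑ y, g (x * y) * f y) ^ 2 := by
          refine Finset.sum_le_sum fun x hx => ?_
          rw [hc, ← neg_sq (_ - _)]
          rw [hbad, Finset.mem_filter] at hx
          have hAB : δ ^ 2 * N ≤ A.card * B.card / N := by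
            rw [le_div_iff₀ hNpos]
            calc δ ^ 2 * N * N = (δ * N) * (δ * N) := by ring
              _ ≤ _ := by gcongr
          have := mul_le_mul_of_nonneg_left hAB hε.le
          refine pow_le_pow_left₀ (by positivity) ?_ 2
          linarith [hx.2]
      _ ≤ _ := Finset.sum_le_sum_of_subset_of_nonneg (Finset.subset_univ _)
          fun _ _ _ => by positivity
  have hfin : (d : ℝ) * ((bad.card : ℝ) * (ε * (δ ^ 2 * N)) ^ 2) ≤ N * N * N := by
    calc _ ≤ d * ∑ x, (∑ y, g (x * y) * f y) ^ 2 := by gcongr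
      _ ≤ N * (∑ x, g x ^ 2) * ∑ x, f x ^ 2 := hm
      _ ≤ N * N * N := by
        gcongr
  have : (d * (ε ^ 2 * δ ^ 4) * bad.card) * (N * N) ≤ N * (N * N) := by linarith
  exact le_of_mul_le_mul_right this (by positivity)

open Classical in
lemma card_step {G : Type} [Group G] [Fintype G] {n : ℕ}
    (A : Finset (Fin (n + 1)) → Finset G) (S : Finset G) (hS : S ⊆ A (insert 0 (up ∅))) :
    ∑ x ∈ S, Nat.card {a : Fin n → G // ∀ F : Finset (Fin n), F.Nonempty → prodF a F ∈ fib A x F}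
      ≤ Nat.card {a : Fin (n + 1) → G //
          ∀ F : Finset (Fin (n + 1)), F.Nonempty → prodF a F ∈ A F} := by
  rw [← Finset.sum_coe_sort S, ← Nat.card_sigma]
  refine Nat.card_le_card_of_injective
    (fun p => ⟨Fin.cons p.1.1 p.2.1, ?_⟩) ?_
  · intro E hE
    rcases cases_up E with ⟨F, rfl⟩ | ⟨F, rfl⟩
    · rw [prodF_up]
      have := p.2.2 F ((up_nonempty F).mp hE)
      exact (Finset.mem_filter.mp this).1
    · rw [prodF_insert]
      rcases F.eq_empty_or_nonempty with rfl | hF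
      · have : prodF p.2.1 ∅ = 1 := by simp [prodF]
        rw [this, mul_one]
        exact hS p.1.2
      · exact (Finset.mem_filter.mp (p.2.2 F hF)).2
  · rintro ⟨⟨x, hx⟩, ⟨a, ha⟩⟩ ⟨⟨y, hy⟩, ⟨b, hb⟩⟩ h
    have hval := congrArg Subtype.val h
    simp only at hval
    obtain ⟨h1, h2⟩ := Fin.cons_inj.mp hval
    subst h1; subst h2; rfl

open Classical in
lemma main_ind (n : ℕ) : ∀ δ : ℝ, 0 < δ → ∀ η : ℝ, 0 < η → ∃ d : ℕ, 0 < d ∧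
      ∀ (G : Type) [Group G] [Fintype G], IsQuasirandom G d →
        ∀ A : Finset (Fin n) → Finset G,
          (∀ F : Finset (Fin n), F.Nonempty → δ * Fintype.card G ≤ (A F).card) →
          (1 - η) * ((∏ F, dens A F) * (Fintype.card G : ℝ) ^ n) ≤
            (Nat.card {a : Fin n → G //
              ∀ F : Finset (Fin n), F.Nonempty → prodF a F ∈ A F} : ℝ) := by
  induction n with
  | zero =>
    intro δ _ η hη
    refine ⟨1, one_pos, fun G _ _ _ A _ => ?_⟩
    have he : ∀ F : Finset (Fin 0), ¬ F.Nonempty := fun F => by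
      rw [Finset.eq_empty_of_isEmpty F]; simp
    have h1 : ∏ F, dens A F = 1 := Finset.prod_eq_one fun F _ => by simp [dens, he F]
    have h2 : (Nat.card {a : Fin 0 → G //
        ∀ F : Finset (Fin 0), F.Nonempty → prodF a F ∈ A F}) = 1 := by
      rw [Nat.card_eq_one_iff_unique]
      refine ⟨⟨fun a b => Subtype.ext (Subsingleton.elim _ _)⟩,
        ⟨⟨fun i => i.elim0, fun F hF => absurd hF (he F)⟩⟩⟩
    rw [h1, h2]
    simp only [pow_zero, mul_one, Nat.cast_one]
    linarith
  | succ n ih =>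
    intro δ hδ η hη
    obtain ⟨ε, hε, hε2, hεη⟩ : ∃ ε : ℝ, 0 < ε ∧ ε ≤ 1 / 2 ∧ (2 ^ n + 2) * ε ≤ η := by
      refine ⟨min (1 / 2) (η / (2 ^ n + 2)), by positivity, min_le_left _ _, ?_⟩
      calc (2 ^ n + 2) * min (1 / 2) (η / (2 ^ n + 2)) ≤ (2 ^ n + 2) * (η / (2 ^ n + 2)) := by
            gcongr; exact min_le_right _ _
        _ = η := by field_simp
    obtain ⟨d₀, hd₀, hih⟩ := ih (δ ^ 2 / 2) (by positivity) ε hε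
    obtain ⟨d₁, hd₁⟩ := exists_nat_ge (2 ^ n / (ε ^ 3 * δ ^ 5))
    refine ⟨max d₀ d₁, lt_of_lt_of_le hd₀ (le_max_left _ _), fun G _ _ hq A hA => ?_⟩
    have hq₀ : IsQuasirandom G d₀ := fun V _ _ _ ρ hρ => (le_max_left _ _).trans (hq V ρ hρ)
    have hq₁ : IsQuasirandom G d₁ := fun V _ _ _ ρ hρ => (le_max_right _ _).trans (hq V ρ hρ)
    set N : ℝ := (Fintype.card G : ℝ) with hN
    have hNpos : 0 < N := by rw [hN]; exact_mod_cast Fintype.card_pos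
    have hd₁pos : (0 : ℝ) < d₁ := lt_of_lt_of_le (by positivity) hd₁
    let bad : Finset (Fin n) → Finset G := fun F => Finset.univ.filter (fun x : G =>
      ((fib A x F).card : ℝ) <
        (1 - ε) * ((A (up F)).card * (A (insert 0 (up F))).card / N))
    have hins : ∀ F : Finset (Fin n), (insert 0 (up F)).Nonempty :=
      fun F => Finset.insert_nonempty _ _
    have hbad : ∀ F : Finset (Fin n), F.Nonempty →
        d₁ * (ε ^ 2 * δ ^ 4) * ((bad F).card : ℝ) ≤ N := by
      intro F hF
      have := bad_card hq₁ (A (up F)) (A (insert 0 (up F))) δ ε hδ hε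
        (hA _ ((up_nonempty F).mpr hF)) (hA _ (hins F))
      exact this
    let B : Finset G := (Finset.univ.filter (fun F : Finset (Fin n) => F.Nonempty)).biUnion bad
    have hB : (B.card : ℝ) ≤ ε * δ * N := by
      have h1 : (B.card : ℝ) ≤ ∑ F ∈ Finset.univ.filter (fun F : Finset (Fin n) => F.Nonempty),
          ((bad F).card : ℝ) := by exact_mod_cast Finset.card_biUnion_le
      have hK : 0 < d₁ * (ε ^ 2 * δ ^ 4) := by positivity
      have h2 : (B.card : ℝ) ≤ 2 ^ n * (N / (d₁ * (ε ^ 2 * δ ^ 4))) := by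
        calc (B.card : ℝ) ≤ _ := h1
          _ ≤ ∑ F ∈ Finset.univ.filter (fun F : Finset (Fin n) => F.Nonempty),
              (N / (d₁ * (ε ^ 2 * δ ^ 4))) := by
            refine Finset.sum_le_sum fun F hF => ?_
            rw [le_div_iff₀ hK, mul_comm]
            exact hbad F (Finset.mem_filter.mp hF).2
          _ ≤ ∑ F : Finset (Fin n), (N / (d₁ * (ε ^ 2 * δ ^ 4))) :=
            Finset.sum_le_sum_of_subset_of_nonneg (Finset.subset_univ _)
              fun _ _ _ => by positivity
          _ = _ := by simp
      refine h2.trans ?_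
      rw [div_le_iff₀ (by positivity)] at hd₁
      rw [mul_div_assoc', div_le_iff₀ hK]
      calc (2 : ℝ) ^ n * N ≤ (d₁ * (ε ^ 3 * δ ^ 5)) * N := by gcongr
        _ = _ := by ring
    let A₀ := A (insert 0 (up ∅))
    have hA₀ : δ * N ≤ (A₀.card : ℝ) := hA _ (hins ∅)
    let S := A₀ \ B
    have hScard : (1 - ε) * A₀.card ≤ (S.card : ℝ) := by
      have h1 : A₀.card ≤ S.card + B.card := by
        have := Finset.le_card_sdiff B A₀
        simp only [S]; omega
      have h2 : (A₀.card : ℝ) ≤ S.card + B.card := by exact_mod_cast h1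
      have h3 : ε * δ * N ≤ ε * A₀.card := by
        rw [mul_assoc]; gcongr
      linarith
    have h1ε : 0 < 1 - ε := by linarith
    have hgood : ∀ x ∈ S, ∀ F : Finset (Fin n), F.Nonempty →
        (1 - ε) * ((A (up F)).card * (A (insert 0 (up F))).card / N) ≤ ((fib A x F).card : ℝ) := by
      intro x hx F hF
      by_contra hcon
      push Not at hcon
      refine (Finset.mem_sdiff.mp hx).2 ?_
      refine Finset.mem_biUnion.mpr ⟨F, by simp [hF], ?_⟩
      simp only [bad, Finset.mem_filter, Finset.mem_univ, true_and]
      exact hcon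
    -- product of the densities over nonempty subsets of the tail
    let ψ : Finset (Fin n) → ℝ := fun F =>
      if F.Nonempty then dens A (up F) * dens A (insert 0 (up F)) else 1
    have hdens0 : ∀ E, 0 ≤ dens A E := fun E => by
      unfold dens; split_ifs <;> positivity
    have hψ0 : ∀ F, 0 ≤ ψ F := fun F => by
      simp only [ψ]; split_ifs
      · exact mul_nonneg (hdens0 _) (hdens0 _)
      · norm_num
    have hprod : ∏ E, dens A E = (A₀.card / N) * ∏ F, ψ F := by
      rw [prod_split]
      rw [← Finset.mul_prod_erase _ _ (Finset.mem_univ (∅ : Finset (Fin n))),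
        ← Finset.mul_prod_erase _ ψ (Finset.mem_univ (∅ : Finset (Fin n)))]
      have e1 : dens A (up ∅) = 1 := by simp [dens, up]
      have e2 : dens A (insert 0 (up ∅)) = A₀.card / N := by
        unfold dens; rw [if_pos (hins ∅)]
      have e3 : ψ ∅ = 1 := by simp [ψ]
      rw [e1, e2, e3, one_mul, one_mul]
      congr 1
      refine Finset.prod_congr rfl fun F hF => ?_
      have : F.Nonempty := Finset.nonempty_iff_ne_empty.mpr (Finset.ne_of_mem_erase hF)
      simp only [ψ, if_pos this]
    have hfibdens : ∀ x ∈ S, ∀ F, (1 - ε) * ψ F ≤ dens (fib A x) F := by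
      intro x hx F
      by_cases hF : F.Nonempty
      · have := hgood x hx F hF
        simp only [ψ, dens, if_pos hF, if_pos ((up_nonempty F).mpr hF), if_pos (hins F)]
        rw [← hN, le_div_iff₀ hNpos]
        refine le_trans (le_of_eq ?_) this
        field_simp
      · simp only [ψ, dens, if_neg hF]; linarith
    have hstep : ∀ x ∈ S, (1 - ε) * (((1 - ε) ^ (2 ^ n) * ∏ F, ψ F) * N ^ n) ≤
        (Nat.card {a : Fin n → G //
          ∀ F : Finset (Fin n), F.Nonempty → prodF a F ∈ fib A x F} : ℝ) := by
      intro x hx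
      refine le_trans ?_ (hih G hq₀ (fib A x) ?_)
      · have : (1 - ε) ^ (2 ^ n) * ∏ F, ψ F ≤ ∏ F, dens (fib A x) F := by
          calc (1 - ε) ^ (2 ^ n) * ∏ F, ψ F = ∏ F : Finset (Fin n), ((1 - ε) * ψ F) := by
                rw [Finset.prod_mul_distrib]; simp
            _ ≤ _ := Finset.prod_le_prod (fun F _ => mul_nonneg h1ε.le (hψ0 F))
                fun F _ => hfibdens x hx F
        gcongr
      · intro F hF
        refine le_trans ?_ (hgood x hx F hF)
        have hAB : δ ^ 2 * N ≤ (A (up F)).card * (A (insert 0 (up F))).card / N := by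
          rw [le_div_iff₀ hNpos]
          calc δ ^ 2 * N * N = (δ * N) * (δ * N) := by ring
            _ ≤ _ := by
              gcongr
              · exact hA _ ((up_nonempty F).mpr hF)
              · exact hA _ (hins F)
        calc δ ^ 2 / 2 * N = 1 / 2 * (δ ^ 2 * N) := by ring
          _ ≤ (1 - ε) * (δ ^ 2 * N) := by gcongr; linarith
          _ ≤ _ := by gcongr
    have hcs := card_step A S Finset.sdiff_subset
    have hcs2 : ∑ x ∈ S, (Nat.card {a : Fin n → G //
        ∀ F : Finset (Fin n), F.Nonempty → prodF a F ∈ fib A x F} : ℝ) ≤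
        (Nat.card {a : Fin (n + 1) → G //
          ∀ F : Finset (Fin (n + 1)), F.Nonempty → prodF a F ∈ A F} : ℝ) := by
      exact_mod_cast hcs
    refine le_trans ?_ hcs2
    refine le_trans ?_ (Finset.sum_le_sum hstep)
    rw [Finset.sum_const, nsmul_eq_mul, hprod]
    have hP : 0 ≤ ∏ F, ψ F := Finset.prod_nonneg fun F _ => hψ0 F
    have hbern : 1 - η ≤ (1 - ε) ^ (2 ^ n + 2) := by
      have := one_add_mul_le_pow (a := -ε) (by linarith) (2 ^ n + 2)
      push_cast at this
      rw [← sub_eq_add_neg] at this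
      linarith
    calc (1 - η) * (A₀.card / N * (∏ F, ψ F) * N ^ (n + 1))
        ≤ (1 - ε) ^ (2 ^ n + 2) * (A₀.card / N * (∏ F, ψ F) * N ^ (n + 1)) := by gcongr
      _ = ((1 - ε) * A₀.card) * ((1 - ε) * (((1 - ε) ^ (2 ^ n) * ∏ F, ψ F) * N ^ n)) := by
        rw [pow_add, pow_succ N]
        field_simp
      _ ≤ _ := by gcongr

lemma alg_final (c P p q : ℝ) (hp : p ≠ 0) (hq : q ≠ 0) :
    c * P / p = c * (P / (p * q) * q) := by
  field_simp

theorem stmt_0 (n : ℕ) (hn : 2 ≤ n) (δ : Finset (Fin n) → ℝ)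
    (hδ : ∀ F : Finset (Fin n), F.Nonempty → 0 < δ F)
    (η : ℝ) (hη : 0 < η) :
    ∃ d : ℕ, 0 < d ∧
      ∀ (G : Type) [Group G] [Fintype G], IsQuasirandom G d →
        ∀ A : Finset (Fin n) → Finset G,
          (∀ F : Finset (Fin n), F.Nonempty → δ F * Fintype.card G ≤ (A F).card) →
          (1 - η) * (∏ F ∈ Finset.univ.filter (fun F : Finset (Fin n) => F.Nonempty),
              ((A F).card : ℝ)) / (Fintype.card G : ℝ) ^ (2 ^ n - 1 - n) ≤
            (Nat.card {a : Fin n → G //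
              ∀ F : Finset (Fin n), F.Nonempty → prodF a F ∈ A F} : ℝ) := by
  obtain ⟨δ₀, hδ₀, hle⟩ : ∃ δ₀ : ℝ, 0 < δ₀ ∧ ∀ F : Finset (Fin n), F.Nonempty → δ₀ ≤ δ F := by
    have hne : (Finset.univ : Finset (Finset (Fin n))).Nonempty := ⟨∅, Finset.mem_univ _⟩
    obtain ⟨F₀, -, hF₀⟩ := Finset.exists_min_image Finset.univ
      (fun F : Finset (Fin n) => if F.Nonempty then δ F else 1) hne
    refine ⟨if F₀.Nonempty then δ F₀ else 1, ?_, fun F hF => ?_⟩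
    · split_ifs with h
      · exact hδ _ h
      · norm_num
    · have := hF₀ F (Finset.mem_univ _)
      simpa only [if_pos hF] using this
  obtain ⟨d, hd, h⟩ := main_ind n δ₀ hδ₀ η hη
  refine ⟨d, hd, fun G _ _ hq A hA => ?_⟩
  refine le_trans (le_of_eq ?_) (h G hq A fun F hF =>
    (mul_le_mul_of_nonneg_right (hle F hF) (by positivity)).trans (hA F hF))
  have hNpos : (0 : ℝ) < Fintype.card G := by exact_mod_cast Fintype.card_pos
  have hcard : (Finset.univ.filter (fun F : Finset (Fin n) => F.Nonempty)).card = 2 ^ n - 1 := by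
    have : Finset.univ.filter (fun F : Finset (Fin n) => F.Nonempty) = Finset.univ.erase ∅ := by
      ext F; simp [Finset.nonempty_iff_ne_empty]
    rw [this, Finset.card_erase_of_mem (Finset.mem_univ _)]; simp
  have hP : ∏ F, dens A F = (∏ F ∈ Finset.univ.filter (fun F : Finset (Fin n) => F.Nonempty),
      ((A F).card : ℝ)) / (Fintype.card G : ℝ) ^ (2 ^ n - 1) := by
    rw [← hcard, ← Finset.prod_const, ← Finset.prod_div_distrib, Finset.prod_filter]
    refine Finset.prod_congr rfl fun F _ => ?_
    unfold dens
    congr 1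
  have hpow : (Fintype.card G : ℝ) ^ (2 ^ n - 1) =
      (Fintype.card G : ℝ) ^ (2 ^ n - 1 - n) * (Fintype.card G : ℝ) ^ n := by
    rw [← pow_add]
    have : n < 2 ^ n := Nat.lt_two_pow_self
    congr 1; omega
  rw [hP, hpow]
  have ha : (Fintype.card G : ℝ) ^ (2 ^ n - 1 - n) ≠ 0 := pow_ne_zero _ hNpos.ne'
  have hb : (Fintype.card G : ℝ) ^ n ≠ 0 := pow_ne_zero _ hNpos.ne'
  exact alg_final _ _ _ _ ha hb
end

section
/- For every real number K ≥ 1 there exists η = η(K) > 0 with the following property: for every abelian group G (written additively) and every finite nonempty subset A of G with |A + A| ≤ K·|A| and such that A contains no element of order 2, the number of pairs (a, b) ∈ G × G with a ∈ A, a + b ∈ A and a + 2b ∈ A is at least η·|A|². -/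
open Pointwise

lemma triple_sum_bound {G : Type} [AddCommGroup G] [DecidableEq G] (K : ℝ)
    (A : Finset G) (hA : A.Nonempty) (h : ((A + A).card : ℝ) ≤ K * A.card) :
    ((A + A + A).card : ℝ) ≤ K ^ 3 * A.card := by
  have h1 := Finset.pluennecke_ruzsa_inequality_nsmul_add hA A 3
  have h2 : 3 • A = A + A + A := by
    rw [show (3 : ℕ) = 2 + 1 from rfl, succ_nsmul, two_nsmul]
  rw [h2] at h1
  have h3 : ((A + A + A).card : ℝ) ≤ (((A + A).card : ℝ) / A.card) ^ 3 * A.card := by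
    have h4 := (NNRat.cast_le (K := ℝ)).2 h1
    push_cast at h4
    exact h4
  have hpos : (0 : ℝ) < A.card := by exact_mod_cast hA.card_pos
  refine h3.trans ?_
  gcongr
  rwa [div_le_iff₀ hpos]

/-- The explicit triangles: `x - z ∈ A` and `y = x + z`. -/
def trivTri {G : Type} [AddCommGroup G] [DecidableEq G] (A : Finset G) :
    Finset ((A + A : Finset G) × (A + A + A : Finset G) × A) :=
  Finset.univ.filter fun q => (q.1 : G) - q.2.2 ∈ A ∧ (q.2.1 : G) = q.1 + q.2.2

lemma trivTri_disjoint {G : Type} [AddCommGroup G] [DecidableEq G] (A : Finset G) :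
    SimpleGraph.TripartiteFromTriangles.ExplicitDisjoint (trivTri A) := by
  constructor
  · intro a b c a' h h'
    simp only [trivTri, Finset.mem_filter] at h h'
    exact Subtype.ext (add_right_cancel (h.2.2.symm.trans h'.2.2))
  · intro a b c a' h h'
    simp only [trivTri, Finset.mem_filter] at h h'
    exact Subtype.ext (h.2.2.trans h'.2.2.symm)
  · intro a b c a' h h'
    simp only [trivTri, Finset.mem_filter] at h h'
    exact Subtype.ext (add_left_cancel (h.2.2.symm.trans h'.2.2))

lemma trivTri_card {G : Type} [AddCommGroup G] [DecidableEq G] (A : Finset G) :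
    A.card ^ 2 ≤ (trivTri A).card := by
  have : Fintype.card (A × A) = A.card ^ 2 := by simp [sq]
  rw [← this, ← Finset.card_univ]
  refine Finset.card_le_card_of_injOn
    (fun p => (⟨p.1 + p.2, Finset.add_mem_add p.1.2 p.2.2⟩,
      ⟨p.1 + p.2 + p.2, Finset.add_mem_add (Finset.add_mem_add p.1.2 p.2.2) p.2.2⟩, p.2)) ?_ ?_
  · intro p _
    simp [trivTri]
  · rintro ⟨a, b⟩ _ ⟨a', b'⟩ _ h
    simp only [Prod.mk.injEq, Subtype.mk.injEq] at h
    obtain ⟨h1, -, rfl⟩ := h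
    rw [Subtype.ext (add_right_cancel h1)]

lemma clique_card {G : Type} [AddCommGroup G] [DecidableEq G] (A : Finset G) :
    ((SimpleGraph.TripartiteFromTriangles.graph (trivTri A)).cliqueFinset 3).card ≤
      Nat.card {p : G × G // p.1 ∈ A ∧ p.1 + p.2 ∈ A ∧ p.1 + 2 • p.2 ∈ A} * A.card := by
  classical
  have hfin : {p : G × G | p.1 ∈ A ∧ p.1 + p.2 ∈ A ∧ p.1 + 2 • p.2 ∈ A}.Finite := by
    refine (A ×ˢ (A - A)).finite_toSet.subset ?_
    rintro ⟨a, b⟩ ⟨h1, h2, -⟩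
    simp only [Finset.coe_product, Set.mem_prod, Finset.mem_coe]
    exact ⟨h1, by simpa using Finset.sub_mem_sub h2 h1⟩
  have hcard : Nat.card {p : G × G // p.1 ∈ A ∧ p.1 + p.2 ∈ A ∧ p.1 + 2 • p.2 ∈ A} =
      hfin.toFinset.card := Set.ncard_eq_toFinset_card _ hfin
  rw [hcard, ← Finset.card_product]
  let S : Finset ((A + A : Finset G) × (A + A + A : Finset G) × A) :=
    Finset.univ.filter fun q => (q.1 : G) - q.2.2 ∈ A ∧ (q.2.1 : G) - 2 • (q.2.2 : G) ∈ A ∧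
      2 • (q.1 : G) - q.2.1 ∈ A
  have h1 : (SimpleGraph.TripartiteFromTriangles.graph (trivTri A)).cliqueFinset 3 ⊆
      S.image SimpleGraph.TripartiteFromTriangles.toTriangle := by
    intro s hs
    rw [SimpleGraph.mem_cliqueFinset_iff, SimpleGraph.is3Clique_iff] at hs
    obtain ⟨x, y, z, hxy, hxz, hyz, rfl⟩ := hs
    obtain ⟨a, b, c, habc, hab, hac, hbc⟩ :=
      SimpleGraph.TripartiteFromTriangles.graph_triple hxy hxz hyz
    obtain ⟨c', hc'⟩ := SimpleGraph.TripartiteFromTriangles.Graph.in₀₁_iff.1 hab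
    obtain ⟨b', hb'⟩ := SimpleGraph.TripartiteFromTriangles.Graph.in₀₂_iff.1 hac
    obtain ⟨a', ha'⟩ := SimpleGraph.TripartiteFromTriangles.Graph.in₁₂_iff.1 hbc
    simp only [trivTri, Finset.mem_filter, Finset.mem_univ, true_and] at hc' hb' ha'
    refine Finset.mem_image.2 ⟨(a, b, c), ?_, habc⟩
    simp only [S, Finset.mem_filter, Finset.mem_univ, true_and]
    refine ⟨hb'.1, ?_, ?_⟩
    · rw [ha'.2]
      convert ha'.1 using 1
      abel
    · rw [hc'.2]
      convert hc'.1 using 1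
      abel
  refine (Finset.card_le_card h1).trans (Finset.card_image_le.trans ?_)
  refine Finset.card_le_card_of_injOn
    (fun q => (((q.2.1 : G) - 2 • (q.2.2 : G), (q.1 : G) + q.2.2 - q.2.1), (q.2.2 : G))) ?_ ?_
  · rintro ⟨x, y, z⟩ hq
    simp only [S, Finset.coe_filter, Finset.mem_univ, true_and, Set.mem_setOf_eq] at hq
    simp only [Finset.coe_product, Set.mem_prod, Finset.mem_coe, Set.Finite.mem_toFinset,
      Set.mem_setOf_eq]
    refine ⟨⟨hq.2.1, ?_, ?_⟩, z.2⟩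
    · convert hq.1 using 1
      abel
    · convert hq.2.2 using 1
      abel
  · rintro ⟨x, y, z⟩ _ ⟨x', y', z'⟩ _ h
    simp only [Prod.mk.injEq] at h
    obtain ⟨⟨h1, h2⟩, h3⟩ := h
    obtain rfl := Subtype.ext h3
    obtain rfl := Subtype.ext (sub_left_injective h1)
    obtain rfl := Subtype.ext (add_right_cancel (sub_left_injective h2))
    rfl

theorem stmt_3 (K : ℝ) (hK : 1 ≤ K) :
    ∃ η : ℝ, 0 < η ∧
      ∀ (G : Type) [AddCommGroup G] [DecidableEq G] (A : Finset G),
        A.Nonempty →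
        ((A + A).card : ℝ) ≤ K * A.card →
        (∀ a ∈ A, a + a = 0 → a = 0) →
        η * (A.card : ℝ) ^ 2 ≤
          (Nat.card {p : G × G //
            p.1 ∈ A ∧ p.1 + p.2 ∈ A ∧ p.1 + 2 • p.2 ∈ A} : ℝ) := by
  have hε : 0 < 1 / (9 * K ^ 6) := by positivity
  have hη := SimpleGraph.triangleRemovalBound_pos hε
  refine ⟨_, hη, ?_⟩
  intro G _ _ A hA h _
  have h3 := triple_sum_bound K A hA h
  have hpos : (0 : ℝ) < A.card := by exact_mod_cast hA.card_pos
  have hd := trivTri_disjoint A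
  have ht : ((A.card : ℝ)) ^ 2 ≤ (trivTri A).card := by exact_mod_cast trivTri_card A
  have hK3 : K ≤ K ^ 3 := le_self_pow₀ hK (by norm_num)
  have hN : ((A + A).card : ℝ) + (A + A + A).card + A.card ≤ 3 * K ^ 3 * A.card := by
    nlinarith [mul_le_mul_of_nonneg_right hK3 hpos.le, mul_le_mul_of_nonneg_right hK hpos.le]
  have hfar : (SimpleGraph.TripartiteFromTriangles.graph (trivTri A)).FarFromTriangleFree
      (1 / (9 * K ^ 6)) := by
    refine SimpleGraph.TripartiteFromTriangles.farFromTriangleFree _ (le_trans ?_ ht)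
    simp only [Fintype.card_coe]
    push_cast
    calc _ ≤ 1 / (9 * K ^ 6) * (3 * K ^ 3 * A.card) ^ 2 := by gcongr
      _ = _ := by field_simp; ring
  have hr := hfar.le_card_cliqueFinset
  have hc : (((SimpleGraph.TripartiteFromTriangles.graph (trivTri A)).cliqueFinset 3).card : ℝ) ≤
      Nat.card {p : G × G // p.1 ∈ A ∧ p.1 + p.2 ∈ A ∧ p.1 + 2 • p.2 ∈ A} * A.card := by
    exact_mod_cast clique_card A
  refine le_of_mul_le_mul_right (le_trans ?_ (hr.trans ?_)) hpos
  · rw [mul_assoc, ← pow_succ]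
    simp only [Fintype.card_sum, Fintype.card_coe]
    push_cast
    gcongr
    have : (0 : ℝ) ≤ (A + A).card := by positivity
    have : (0 : ℝ) ≤ (A + A + A).card := by positivity
    linarith
  · convert hc
end

section
/- For every real number K ≥ 1 and all positive integers k and m there exists η = η(K, k, m) > 0 with the following property: for every group G, every finite nonempty subset A of G with |A·A·A| ≤ K·|A|, and any three functions f₁, f₂, f₃ from A to the m-fold productset A^{⊙m}, each having all fibers of size at most k, such that f₁(a)·f₂(a) = f₃(a) for all a ∈ A, the number of triples (a₁, a₂, a₃) ∈ A × A × A with f₁(a₁)·f₂(a₂) = f₃(a₃) is at least η·|A|². -/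
open Pointwise

open Finset in
lemma card_triple_aux {G : Type} [Group G] [DecidableEq G] (A : Finset G) (hA : A.Nonempty)
    (K : ℝ) (h : ((A * A * A).card : ℝ) ≤ K * A.card) (i j l : Fin 3) :
    (((![A, A⁻¹, 1] : Fin 3 → Finset G) i * (![A, A⁻¹, 1] : Fin 3 → Finset G) j *
      (![A, A⁻¹, 1] : Fin 3 → Finset G) l).card : ℝ) ≤ K ^ 3 * A.card := by
  have h3 : ((A ^ 3).card : ℝ) ≤ K * A.card := by simpa [pow_succ] using h
  have key : ∀ a b c : ℤ, |a| = 1 → |b| = 1 → |c| = 1 →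
      ((A ^ a * A ^ b * A ^ c).card : ℝ) ≤ K ^ 3 * A.card := by
    intro a b c ha hb hc
    have := Finset.small_alternating_pow_of_small_tripling (m := 3) le_rfl h3 ![a, b, c]
      (fun i => by fin_cases i <;> simpa)
    simpa [List.finRange_succ, mul_assoc] using this
  have k1 := key 1 1 1 (by simp) (by simp) (by simp)
  have k2 := key 1 1 (-1) (by simp) (by simp) (by simp)
  have k3 := key 1 (-1) 1 (by simp) (by simp) (by simp)
  have k4 := key 1 (-1) (-1) (by simp) (by simp) (by simp)
  have k5 := key (-1) 1 1 (by simp) (by simp) (by simp)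
  have k6 := key (-1) 1 (-1) (by simp) (by simp) (by simp)
  have k7 := key (-1) (-1) 1 (by simp) (by simp) (by simp)
  have k8 := key (-1) (-1) (-1) (by simp) (by simp) (by simp)
  simp only [zpow_one, zpow_neg] at k1 k2 k3 k4 k5 k6 k7 k8
  have drop : ∀ X : Finset G, (X.card : ℝ) ≤ (X * A).card := fun X => by
    exact_mod_cast Finset.card_le_card_mul_right hA
  have d1 := drop (A * A)
  have d2 := drop (A * A⁻¹)
  have d3 := drop (A⁻¹ * A)
  have d4 := drop (A⁻¹ * A⁻¹)
  have d5 := drop A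
  have d6 := drop A⁻¹
  have d7 : (1:ℝ) ≤ A.card := by exact_mod_cast hA.card_pos
  have e := Finset.card_inv A
  have e' : ((A⁻¹).card : ℝ) = A.card := by exact_mod_cast e
  fin_cases i <;> fin_cases j <;> fin_cases l <;>
    simp [-Finset.card_inv] <;> linarith

lemma card_pow_aux {G : Type} [Group G] [DecidableEq G] (A : Finset G) (hA : A.Nonempty)
    (K : ℝ) (hK : 1 ≤ K) (h : ((A * A * A).card : ℝ) ≤ K * A.card) (m : ℕ) (hm : 0 < m) :
    (((A ∪ A⁻¹ ∪ {1}) ^ (m + 1)).card : ℝ) ≤ (27 * K ^ 3) ^ m * 3 * A.card := by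
  set S : Finset G := A ∪ A⁻¹ ∪ {1} with hS
  let P : Fin 3 → Finset G := ![A, A⁻¹, 1]
  have hAS : A ⊆ S := by rw [hS, Finset.union_assoc]; exact Finset.subset_union_left
  have h1S : (1 : G) ∈ S := by simp [hS]
  have hSP : ∀ x ∈ S, ∃ i, x ∈ P i := by
    intro x hx
    simp only [hS, Finset.mem_union, Finset.mem_singleton] at hx
    rcases hx with (hx | hx) | hx
    · exact ⟨0, by simpa [P] using hx⟩
    · exact ⟨1, by simpa [P] using hx⟩
    · exact ⟨2, by simpa [P] using hx⟩
  have hsub : S ^ 3 ⊆ (Finset.univ : Finset (Fin 3 × Fin 3 × Fin 3)).biUnion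
      (fun p => P p.1 * P p.2.1 * P p.2.2) := by
    intro x hx
    rw [pow_succ, pow_succ, pow_one, Finset.mem_mul] at hx
    obtain ⟨y, hy, z, hz, rfl⟩ := hx
    obtain ⟨u, hu, v, hv, rfl⟩ := Finset.mem_mul.1 hy
    obtain ⟨i, hi⟩ := hSP _ hu
    obtain ⟨j, hj⟩ := hSP _ hv
    obtain ⟨l, hl⟩ := hSP _ hz
    exact Finset.mem_biUnion.2 ⟨(i, j, l), Finset.mem_univ _,
      Finset.mul_mem_mul (Finset.mul_mem_mul hi hj) hl⟩
  have hcardS3 : ((S ^ 3).card : ℝ) ≤ 27 * K ^ 3 * A.card := by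
    calc ((S ^ 3).card : ℝ) ≤ ∑ p : Fin 3 × Fin 3 × Fin 3, ((P p.1 * P p.2.1 * P p.2.2).card : ℝ) := by
          exact_mod_cast (Finset.card_le_card hsub).trans Finset.card_biUnion_le
      _ ≤ ∑ p : Fin 3 × Fin 3 × Fin 3, K ^ 3 * A.card :=
          Finset.sum_le_sum fun p _ => card_triple_aux A hA K h _ _ _
      _ = 27 * K ^ 3 * A.card := by simp; ring
  have hcS : (A.card : ℝ) ≤ S.card := by exact_mod_cast Finset.card_le_card hAS
  have hSc : (S.card : ℝ) ≤ 3 * A.card := by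
    have h1 := Finset.card_union_le (A ∪ A⁻¹) {1}
    have h2 := Finset.card_union_le A A⁻¹
    have h3 := hA.card_pos
    rw [Finset.card_inv] at h2
    rw [Finset.card_singleton, ← hS] at h1
    have : S.card ≤ 3 * A.card := by omega
    exact_mod_cast this
  have hsymm : S⁻¹ = S := by
    ext x; simp [hS]; tauto
  have := Finset.small_pow_of_small_tripling (A := S) (K := 27 * K ^ 3) (m := m + 2) (by omega)
    (hcardS3.trans (by gcongr)) hsymm
  calc ((S ^ (m + 1)).card : ℝ) ≤ (S ^ (m + 2)).card := by
        exact_mod_cast Finset.card_le_card (Finset.pow_subset_pow_right h1S (by omega))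
    _ ≤ (27 * K ^ 3) ^ m * S.card := by simpa using this
    _ ≤ (27 * K ^ 3) ^ m * (3 * A.card) := by gcongr
    _ = _ := by ring

lemma exists_inj_aux {G : Type} [DecidableEq G] (A : Finset G) (k : ℕ) (f₁ f₂ f₃ : G → G)
    (h1 : ∀ g : G, (A.filter (fun a => f₁ a = g)).card ≤ k)
    (h2 : ∀ g : G, (A.filter (fun a => f₂ a = g)).card ≤ k)
    (h3 : ∀ g : G, (A.filter (fun a => f₃ a = g)).card ≤ k) :
    ∃ B ⊆ A, A.card ≤ B.card * (3 * k) ∧ Set.InjOn f₁ B ∧ Set.InjOn f₂ B ∧ Set.InjOn f₃ B := by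
  classical
  obtain ⟨B, hB, hmax⟩ := Finset.exists_max_image
    (A.powerset.filter fun B : Finset G =>
      Set.InjOn f₁ (B : Set G) ∧ Set.InjOn f₂ (B : Set G) ∧ Set.InjOn f₃ (B : Set G))
    Finset.card ⟨∅, by simp⟩
  simp only [Finset.mem_filter, Finset.mem_powerset] at hB hmax
  obtain ⟨hBA, i1, i2, i3⟩ := hB
  refine ⟨B, hBA, ?_, i1, i2, i3⟩
  let F : G → Finset G := fun b => A.filter (fun a => f₁ a = f₁ b) ∪
    A.filter (fun a => f₂ a = f₂ b) ∪ A.filter (fun a => f₃ a = f₃ b)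
  have hF : ∀ b ∈ B, (F b).card ≤ 3 * k := by
    intro b _
    have u := Finset.card_union_le (A.filter (fun a => f₁ a = f₁ b) ∪
      A.filter (fun a => f₂ a = f₂ b)) (A.filter (fun a => f₃ a = f₃ b))
    have v := Finset.card_union_le (A.filter (fun a => f₁ a = f₁ b))
      (A.filter (fun a => f₂ a = f₂ b))
    have := h1 (f₁ b)
    have := h2 (f₂ b)
    have := h3 (f₃ b)
    simp only [F]
    omega
  have hsub : A ⊆ B.biUnion F := by
    intro a ha
    by_contra hcon
    simp only [F, Finset.mem_biUnion, Finset.mem_union, Finset.mem_filter, not_exists, not_and,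
      not_or, ha, true_and] at hcon
    have haB : a ∉ B := fun hb => (hcon a hb).2 rfl
    have := hmax (insert a B) ⟨Finset.insert_subset ha hBA, ?_⟩
    · rw [Finset.card_insert_of_notMem haB] at this
      omega
    · rw [Finset.coe_insert, Set.injOn_insert (by simpa using haB),
        Set.injOn_insert (by simpa using haB), Set.injOn_insert (by simpa using haB)]
      refine ⟨⟨i1, ?_⟩, ⟨i2, ?_⟩, ⟨i3, ?_⟩⟩ <;> rintro ⟨b, hb, e⟩
      · exact (hcon b hb).1.1 e.symm
      · exact (hcon b hb).1.2 e.symm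
      · exact (hcon b hb).2 e.symm
  exact (Finset.card_le_card hsub).trans (Finset.card_biUnion_le_card_mul _ _ _ hF)

open SimpleGraph TripartiteFromTriangles in
lemma core_aux {G : Type} [Group G] [DecidableEq G] (A B W : Finset G) (hBA : B ⊆ A)
    (hA : A.Nonempty) (hAW : A ⊆ W)
    (f₁ f₂ f₃ : G → G) (i1 : Set.InjOn f₁ B) (i2 : Set.InjOn f₂ B) (i3 : Set.InjOn f₃ B)
    (m1 : ∀ x ∈ A, ∀ a ∈ B, x * f₁ a ∈ W) (m3 : ∀ x ∈ A, ∀ a ∈ B, x * f₃ a ∈ W)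
    (hf : ∀ a ∈ B, f₁ a * f₂ a = f₃ a) (ε : ℝ) (hε : 0 < ε)
    (hcard : ε * (3 * W.card : ℝ) ^ 2 ≤ A.card * B.card) (T : Finset (G × G × G))
    (hT : ∀ a ∈ B, ∀ b ∈ B, ∀ c ∈ B, f₁ a * f₂ b = f₃ c → (a, b, c) ∈ T) :
    triangleRemovalBound ε * (A.card : ℝ) ^ 2 ≤ T.card := by
  classical
  let t : Finset (W × W × W) := Finset.univ.filter fun p =>
    p.1.1 ∈ A ∧ ∃ a ∈ B, p.2.1.1 = p.1.1 * f₁ a ∧ p.2.2.1 = p.1.1 * f₃ a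
  have ht : ∀ x y z : W, (x, y, z) ∈ t ↔
      x.1 ∈ A ∧ ∃ a ∈ B, y.1 = x.1 * f₁ a ∧ z.1 = x.1 * f₃ a := by
    intro x y z; simp [t]
  have hdis : ExplicitDisjoint t := by
    constructor
    · intro x y z x' h h'
      obtain ⟨_, a, ha, e1, e2⟩ := (ht _ _ _).1 h
      obtain ⟨_, b, hb, e3, e4⟩ := (ht _ _ _).1 h'
      rw [← hf a ha, ← mul_assoc, ← e1] at e2
      rw [← hf b hb, ← mul_assoc, ← e3, e2] at e4
      have := i2 ha hb (mul_left_cancel e4)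
      subst this
      rw [e1] at e3
      exact Subtype.ext (mul_right_cancel e3)
    · intro x y z y' h h'
      obtain ⟨_, a, ha, e1, e2⟩ := (ht _ _ _).1 h
      obtain ⟨_, b, hb, e3, e4⟩ := (ht _ _ _).1 h'
      rw [e2] at e4
      have := i3 ha hb (mul_left_cancel e4)
      subst this
      exact Subtype.ext (e1.trans e3.symm)
    · intro x y z z' h h'
      obtain ⟨_, a, ha, e1, e2⟩ := (ht _ _ _).1 h
      obtain ⟨_, b, hb, e3, e4⟩ := (ht _ _ _).1 h'
      rw [e1] at e3
      have := i1 ha hb (mul_left_cancel e3)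
      subst this
      exact Subtype.ext (e2.trans e4.symm)
  let val3 : W × W × W → G × G × G := fun q => (q.1.1, q.2.1.1, q.2.2.1)
  have hval3 : Function.Injective val3 := by
    rintro ⟨a, b, c⟩ ⟨a', b', c'⟩ h
    simp only [val3, Prod.mk.injEq] at h
    obtain ⟨h1, h2, h3⟩ := h
    rw [Subtype.ext h1, Subtype.ext h2, Subtype.ext h3]
  have htcard : A.card * B.card ≤ t.card := by
    rw [← Finset.card_product, ← Finset.card_image_of_injective t hval3]
    apply Finset.card_le_card_of_injOn (fun p => (p.1, p.1 * f₁ p.2, p.1 * f₃ p.2))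
    · rintro ⟨x, a⟩ h
      obtain ⟨hx, ha⟩ := Finset.mem_product.1 h
      refine Finset.mem_image.2 ⟨(⟨x, hAW hx⟩, ⟨_, m1 x hx a ha⟩, ⟨_, m3 x hx a ha⟩), ?_, rfl⟩
      exact (ht _ _ _).2 ⟨hx, a, ha, rfl, rfl⟩
    · rintro ⟨x, a⟩ h ⟨x', a'⟩ h' e
      obtain ⟨hx, ha⟩ := Finset.mem_product.1 h
      obtain ⟨hx', ha'⟩ := Finset.mem_product.1 h'
      simp only [Prod.mk.injEq] at e
      obtain ⟨rfl, e, -⟩ := e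
      exact Prod.ext rfl (i1 ha ha' (mul_left_cancel e))
  have hfar : (graph t).FarFromTriangleFree ε := by
    refine farFromTriangleFree t ?_
    refine le_trans ?_ (hcard.trans (by exact_mod_cast htcard))
    simp only [Fintype.card_coe]
    push_cast
    apply le_of_eq; ring
  have hrem := hfar.le_card_cliqueFinset
  let Q : Finset (W × W × W) := Finset.univ.filter fun p =>
    (graph t).Adj (Sum3.in₀ p.1) (Sum3.in₁ p.2.1) ∧ (graph t).Adj (Sum3.in₀ p.1) (Sum3.in₂ p.2.2)
      ∧ (graph t).Adj (Sum3.in₁ p.2.1) (Sum3.in₂ p.2.2)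
  have hQ1 : ((graph t).cliqueFinset 3).card ≤ Q.card := by
    refine le_trans (Finset.card_le_card (t := Q.image toTriangle) ?_) Finset.card_image_le
    intro s hs
    rw [mem_cliqueFinset_iff, SimpleGraph.is3Clique_iff] at hs
    obtain ⟨x, y, z, hxy, hxz, hyz, rfl⟩ := hs
    obtain ⟨a, b, c, habc, hab, hac, hbc⟩ := graph_triple hxy hxz hyz
    exact Finset.mem_image.2 ⟨(a, b, c), by simp only [Q, Finset.mem_filter]; exact ⟨Finset.mem_univ _, hab, hac, hbc⟩, habc⟩
  have hQ2 : Q.card ≤ A.card * T.card := by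
    rw [← Finset.card_product, ← Finset.card_image_of_injective Q hval3]
    refine le_trans (Finset.card_le_card (t := (A ×ˢ T).image
      (fun p => (p.1, p.1 * f₁ p.2.1, p.1 * f₃ p.2.2.2))) ?_) Finset.card_image_le
    intro s hs
    obtain ⟨⟨x, y, z⟩, hq, rfl⟩ := Finset.mem_image.1 hs
    obtain ⟨-, hxy, hxz, hyz⟩ := Finset.mem_filter.1 hq
    simp only [Graph.in₀₁_iff, Graph.in₀₂_iff, Graph.in₁₂_iff, ht] at hxy hxz hyz
    obtain ⟨_, hx, a, ha, e1, -⟩ := hxy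
    obtain ⟨_, -, c, hc, -, e2⟩ := hxz
    obtain ⟨x', -, b, hb, e3, e4⟩ := hyz
    refine Finset.mem_image.2 ⟨(x.1, a, b, c), Finset.mem_product.2 ⟨hx, hT a ha b hb c hc ?_⟩, ?_⟩
    · rw [← hf b hb, ← mul_assoc, ← e3, e1, e2, mul_assoc] at e4
      exact (mul_left_cancel e4).symm
    · simp only [val3, e1, e2]
  have hAc : (0 : ℝ) < A.card := by exact_mod_cast hA.card_pos
  have hAWc : (A.card : ℝ) ≤ W.card := by exact_mod_cast Finset.card_le_card hAW
  have hQ : (((graph t).cliqueFinset 3).card : ℝ) ≤ A.card * T.card := by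
    exact_mod_cast hQ1.trans hQ2
  have hpos : 0 < triangleRemovalBound ε := triangleRemovalBound_pos hε
  refine le_of_mul_le_mul_left ?_ hAc
  refine le_trans ?_ (hrem.trans hQ)
  calc (A.card : ℝ) * (triangleRemovalBound ε * (A.card : ℝ) ^ 2)
      = triangleRemovalBound ε * (A.card : ℝ) ^ 3 := by ring
    _ ≤ _ := by
      gcongr
      simp only [Fintype.card_sum, Fintype.card_coe]
      have := Finset.card_le_card hAW
      omega

theorem stmt_5 (K : ℝ) (hK : 1 ≤ K) (k m : ℕ) (hk : 0 < k) (hm : 0 < m) :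
    ∃ η : ℝ, 0 < η ∧
      ∀ (G : Type) [Group G] [DecidableEq G] (A : Finset G),
        A.Nonempty →
        ((A * A * A).card : ℝ) ≤ K * A.card →
        ∀ f₁ f₂ f₃ : G → G,
          (∀ a ∈ A, f₁ a ∈ (A ∪ A⁻¹ ∪ {1}) ^ m) →
          (∀ a ∈ A, f₂ a ∈ (A ∪ A⁻¹ ∪ {1}) ^ m) →
          (∀ a ∈ A, f₃ a ∈ (A ∪ A⁻¹ ∪ {1}) ^ m) →
          (∀ g : G, (A.filter (fun a => f₁ a = g)).card ≤ k) →
          (∀ g : G, (A.filter (fun a => f₂ a = g)).card ≤ k) →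
          (∀ g : G, (A.filter (fun a => f₃ a = g)).card ≤ k) →
          (∀ a ∈ A, f₁ a * f₂ a = f₃ a) →
          η * (A.card : ℝ) ^ 2 ≤
            (Nat.card {p : G × G × G //
              p.1 ∈ A ∧ p.2.1 ∈ A ∧ p.2.2 ∈ A ∧ f₁ p.1 * f₂ p.2.1 = f₃ p.2.2} : ℝ) := by
  set C : ℝ := (27 * K ^ 3) ^ m * 3 with hC
  have hCpos : 0 < C := by positivity
  have hk' : (0 : ℝ) < k := by exact_mod_cast hk
  have hεpos : 0 < 1 / (27 * k * C ^ 2) := by positivity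
  refine ⟨SimpleGraph.triangleRemovalBound (1 / (27 * k * C ^ 2)),
    SimpleGraph.triangleRemovalBound_pos hεpos, ?_⟩
  intro G _ _ A hA h3 f₁ f₂ f₃ g1 g2 g3 h1 h2 h3' hf
  obtain ⟨B, hBA, hBc, i1, i2, i3⟩ := exists_inj_aux A k f₁ f₂ f₃ h1 h2 h3'
  have hW := card_pow_aux A hA K hK h3 m hm
  have hAS : A ⊆ A ∪ A⁻¹ ∪ {1} := by rw [Finset.union_assoc]; exact Finset.subset_union_left
  rw [Nat.subtype_card ((A ×ˢ A ×ˢ A).filter fun p => f₁ p.1 * f₂ p.2.1 = f₃ p.2.2)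
    (by rintro ⟨a, b, c⟩; simp [and_assoc])]
  refine core_aux A B ((A ∪ A⁻¹ ∪ {1}) ^ (m + 1)) hBA hA ?_ f₁ f₂ f₃ i1 i2 i3 ?_ ?_
    (fun a ha => hf a (hBA ha)) _ hεpos ?_ _ ?_
  · refine hAS.trans ?_
    have : (A ∪ A⁻¹ ∪ {1}) ^ 1 ⊆ (A ∪ A⁻¹ ∪ {1}) ^ (m + 1) :=
      Finset.pow_subset_pow_right (by simp) (by omega)
    simpa using this
  · intro x hx a ha
    rw [pow_succ']
    exact Finset.mul_mem_mul (hAS hx) (g1 a (hBA ha))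
  · intro x hx a ha
    rw [pow_succ']
    exact Finset.mul_mem_mul (hAS hx) (g3 a (hBA ha))
  · have hBc' : (A.card : ℝ) ≤ B.card * (3 * k) := by exact_mod_cast hBc
    calc 1 / (27 * k * C ^ 2) * (3 * (((A ∪ A⁻¹ ∪ {1}) ^ (m + 1)).card : ℝ)) ^ 2
        ≤ 1 / (27 * k * C ^ 2) * (3 * (C * (A.card : ℝ))) ^ 2 := by gcongr
      _ = (A.card : ℝ) * ((A.card : ℝ) / (3 * k)) := by field_simp; ring
      _ ≤ (A.card : ℝ) * B.card := by
        gcongr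
        rw [div_le_iff₀ (by positivity)]
        exact hBc'
  · intro a ha b hb c hc e
    simp only [Finset.mem_filter, Finset.mem_product]
    exact ⟨⟨hBA ha, hBA hb, hBA hc⟩, e⟩
end

section
/- For every real number K ≥ 1 and all positive integers k, m and every ε > 0 there exists η > 0 with the following property: for every group G, every finite nonempty subset A of G with |A·A·A| ≤ K·|A|, and any three functions f₁, f₂, f₃ from A to the m-fold productset A^{⊙m}, each having all fibers of size at most k, such that |{a ∈ A : f₁(a)·f₂(a) = f₃(a)}| ≥ ε·|A|, the number of triples (a₁, a₂, a₃) ∈ A × A × A with f₁(a₁)·f₂(a₂) = f₃(a₃) is at least η·|A|². -/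
open Pointwise

/-- The product of a word in `A` and `A⁻¹`. -/
def wordProd {G : Type} [Group G] [DecidableEq G] (A : Finset G) (w : List Bool) : Finset G :=
  (w.map fun b => if b then A else A⁻¹).prod

theorem wordProd_append {G : Type} [Group G] [DecidableEq G] (A : Finset G) (w v : List Bool) :
    wordProd A (w ++ v) = wordProd A w * wordProd A v := by
  simp [wordProd]

theorem card_wordProd_le {G : Type} [Group G] [DecidableEq G] (A : Finset G) (hA : A.Nonempty)
    (K : ℝ) (h : ((A * A * A).card : ℝ) ≤ K * A.card) (w : List Bool) :
    ((wordProd A w).card : ℝ) ≤ K ^ (3 * (w.length + 1)) * A.card := by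
  have h3 : ((A ^ 3).card : ℝ) ≤ K * A.card := by simpa [pow_succ] using h
  set v := w ++ [true, true, true] with hv
  have hlen : v.length = w.length + 3 := by simp [hv]
  have hne : (wordProd A [true, true, true]).Nonempty := by
    simp [wordProd, hA]
  have h1 : (wordProd A w).card ≤ (wordProd A v).card := by
    rw [hv, wordProd_append]
    exact Finset.card_le_card_mul_right hne
  have h2 := Finset.small_alternating_pow_of_small_tripling (m := v.length) (by omega) h3
    (fun i => if v.get i then 1 else -1) (by intro i; split_ifs <;> simp)
  have h4 : ((List.finRange v.length).map fun i ↦ A ^ (if v.get i then (1:ℤ) else -1)).prod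
      = wordProd A v := by
    unfold wordProd
    congr 1
    conv_rhs => rw [← List.map_get_finRange v]
    rw [List.map_map]
    apply List.map_congr_left
    intro i _
    simp only [Function.comp]
    split_ifs <;> simp
  rw [h4] at h2
  have e : 3 * (v.length - 2) = 3 * (w.length + 1) := by omega
  rw [e] at h2
  exact le_trans (by exact_mod_cast h1) h2

theorem card_wordProd_mul_pow_le {G : Type} [Group G] [DecidableEq G] (A : Finset G)
    (hA : A.Nonempty)
    (K : ℝ) (hK : 1 ≤ K) (h : ((A * A * A).card : ℝ) ≤ K * A.card) (n : ℕ) :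
    ∀ w : List Bool, ((wordProd A w * (A ∪ A⁻¹ ∪ {1}) ^ n).card : ℝ)
      ≤ 3 ^ n * K ^ (3 * (w.length + n + 1)) * A.card := by
  induction n with
  | zero => intro w; simpa using card_wordProd_le A hA K h w
  | succ n ih =>
    intro w
    have e : wordProd A w * (A ∪ A⁻¹ ∪ {1}) ^ (n + 1) =
        (wordProd A (w ++ [true]) * (A ∪ A⁻¹ ∪ {1}) ^ n ∪
          wordProd A (w ++ [false]) * (A ∪ A⁻¹ ∪ {1}) ^ n) ∪
          wordProd A w * (A ∪ A⁻¹ ∪ {1}) ^ n := by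
      rw [wordProd_append, wordProd_append, pow_succ', ← mul_assoc]
      have e1 : wordProd A [true] = A := by simp [wordProd]
      have e2 : wordProd A [false] = A⁻¹ := by simp [wordProd]
      have e3 : wordProd A w * {1} = wordProd A w := mul_one _
      rw [e1, e2, Finset.mul_union, Finset.mul_union, e3, Finset.union_mul, Finset.union_mul]
    have h1 := ih (w ++ [true])
    have h2 := ih (w ++ [false])
    have h3 := ih w
    have hmono : (3:ℝ) ^ n * K ^ (3 * (w.length + n + 1)) * A.card
        ≤ 3 ^ n * K ^ (3 * (w.length + (n + 1) + 1)) * A.card := by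
      gcongr
      simp
    simp only [List.length_append, List.length_singleton] at h1 h2
    have e2 : w.length + 1 + n + 1 = w.length + (n + 1) + 1 := by omega
    rw [e2] at h1 h2
    rw [e]
    have hc : ((((wordProd A (w ++ [true]) * (A ∪ A⁻¹ ∪ {1}) ^ n ∪
          wordProd A (w ++ [false]) * (A ∪ A⁻¹ ∪ {1}) ^ n) ∪
          wordProd A w * (A ∪ A⁻¹ ∪ {1}) ^ n).card : ℕ) : ℝ) ≤
        (wordProd A (w ++ [true]) * (A ∪ A⁻¹ ∪ {1}) ^ n).card +
        (wordProd A (w ++ [false]) * (A ∪ A⁻¹ ∪ {1}) ^ n).card +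
        (wordProd A w * (A ∪ A⁻¹ ∪ {1}) ^ n).card := by
      exact_mod_cast (Finset.card_union_le _ _).trans
        (Nat.add_le_add_right (Finset.card_union_le _ _) _)
    have : (3:ℝ) ^ (n+1) = 3 * 3 ^ n := by ring
    rw [this]
    linarith

theorem exists_injOn_subset {G : Type} [DecidableEq G] (S A : Finset G) (hS : S ⊆ A)
    (f : G → G) (k : ℕ) (hf : ∀ g : G, (A.filter (fun a => f a = g)).card ≤ k) :
    ∃ T ⊆ S, Set.InjOn f T ∧ S.card ≤ k * T.card := by
  obtain ⟨T, hTS, hinj, hT⟩ := Finset.exists_subset_injOn_image_eq_of_surjOn (f := f) S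
    (S.image f) (by intro y hy; simpa using hy)
  refine ⟨T, hTS, hinj, ?_⟩
  have h1 := Finset.card_le_mul_card_image (f := f) S k (fun b _ =>
    (Finset.card_le_card (Finset.filter_subset_filter _ hS)).trans (hf b))
  rw [← hT, Finset.card_image_of_injOn hinj] at h1
  exact h1

open SimpleGraph SimpleGraph.TripartiteFromTriangles Sum3 in
theorem triangle_count {G : Type} [Group G] [DecidableEq G] (A S P : Finset G)
    (f₁ f₂ f₃ : G → G) (hAP : A ⊆ P) (hSA : S ⊆ A)
    (h1P : ∀ x ∈ A, ∀ a ∈ S, x * f₁ a ∈ P)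
    (h2P : ∀ x ∈ A, ∀ a ∈ S, x * (f₁ a * f₂ a) ∈ P)
    (h1 : Set.InjOn f₁ S) (h2 : Set.InjOn f₂ S) (h3 : Set.InjOn f₃ S)
    (hS : ∀ a ∈ S, f₁ a * f₂ a = f₃ a) (δ : ℝ)
    (hδ : δ * (3 * P.card : ℝ) ^ 2 ≤ A.card * S.card) :
    triangleRemovalBound δ * (3 * P.card : ℝ) ^ 3 ≤
      A.card * (Nat.card {p : G × G × G //
              p.1 ∈ A ∧ p.2.1 ∈ A ∧ p.2.2 ∈ A ∧ f₁ p.1 * f₂ p.2.1 = f₃ p.2.2} : ℝ) := by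
  classical
  set t : Finset (P × P × P) := (A.attach ×ˢ S.attach).image (fun q =>
    (⟨q.1.1, hAP q.1.2⟩, ⟨q.1.1 * f₁ q.2.1, h1P _ q.1.2 _ q.2.2⟩,
      ⟨q.1.1 * (f₁ q.2.1 * f₂ q.2.1), h2P _ q.1.2 _ q.2.2⟩)) with ht
  have hmem : ∀ x y z : P, (x, y, z) ∈ t ↔ x.1 ∈ A ∧ ∃ a ∈ S, x.1 * f₁ a = y.1 ∧
      x.1 * (f₁ a * f₂ a) = z.1 := by
    intro x y z
    simp only [ht, Finset.mem_image, Finset.mem_product, Finset.mem_attach, true_and, and_true,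
      Prod.exists, Subtype.exists, Prod.mk.injEq, Subtype.ext_iff]
    constructor
    · rintro ⟨x', hx', a, ha, rfl, e1, e2⟩
      exact ⟨hx', a, ha, e1, e2⟩
    · rintro ⟨hx, a, ha, e1, e2⟩
      exact ⟨x, hx, a, ha, rfl, e1, e2⟩
  have hcard : t.card = A.card * S.card := by
    rw [ht, Finset.card_image_of_injective, Finset.card_product, Finset.card_attach,
      Finset.card_attach]
    rintro ⟨⟨x, hx⟩, ⟨a, ha⟩⟩ ⟨⟨y, hy⟩, ⟨b, hb⟩⟩ e
    simp only [Prod.mk.injEq, Subtype.mk.injEq] at e ⊢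
    obtain ⟨rfl, e1, -⟩ := e
    exact ⟨rfl, h1 ha hb (mul_left_cancel e1)⟩
  have hdis : ExplicitDisjoint t := by
    constructor
    · intro x y z x' hx hx'
      rw [hmem] at hx hx'
      obtain ⟨_, a, ha, e1, e2⟩ := hx
      obtain ⟨_, b, hb, e1', e2'⟩ := hx'
      rw [← mul_assoc, e1] at e2
      rw [← mul_assoc, e1'] at e2'
      have hab := h2 ha hb (mul_left_cancel (e2.trans e2'.symm))
      subst hab
      exact Subtype.ext (mul_right_cancel (e1.trans e1'.symm))
    · intro x y z y' hx hx'
      rw [hmem] at hx hx'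
      obtain ⟨_, a, ha, e1, e2⟩ := hx
      obtain ⟨_, b, hb, e1', e2'⟩ := hx'
      have hab : a = b := h3 ha hb (by
        rw [← hS a ha, ← hS b hb]; exact mul_left_cancel (e2.trans e2'.symm))
      subst hab
      exact Subtype.ext (e1.symm.trans e1')
    · intro x y z z' hx hx'
      rw [hmem] at hx hx'
      obtain ⟨_, a, ha, e1, e2⟩ := hx
      obtain ⟨_, b, hb, e1', e2'⟩ := hx'
      have hab := h1 ha hb (mul_left_cancel (e1.trans e1'.symm))
      subst hab
      exact Subtype.ext (e2.symm.trans e2')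
  have hfar : (graph t).FarFromTriangleFree δ := by
    apply farFromTriangleFree
    rw [hcard]
    simp only [Fintype.card_coe]
    push_cast
    refine le_trans (le_of_eq ?_) hδ
    ring
  have hrem := hfar.le_card_cliqueFinset
  have hV : (Fintype.card (P ⊕ P ⊕ P) : ℝ) = 3 * P.card := by
    simp only [Fintype.card_sum, Fintype.card_coe]
    push_cast; ring
  rw [hV] at hrem
  refine hrem.trans ?_
  set T : Finset (G × G × G) := (A ×ˢ A ×ˢ A).filter
    (fun p => f₁ p.1 * f₂ p.2.1 = f₃ p.2.2) with hT
  have hTc : Nat.card {p : G × G × G //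
      p.1 ∈ A ∧ p.2.1 ∈ A ∧ p.2.2 ∈ A ∧ f₁ p.1 * f₂ p.2.1 = f₃ p.2.2} = T.card := by
    rw [← Nat.card_eq_finsetCard T]
    apply Nat.card_congr
    apply Equiv.subtypeEquivRight
    intro p
    simp [hT, and_assoc]
  rw [hTc]
  rw [← Nat.cast_mul, Nat.cast_le, ← Finset.card_product]
  apply Finset.card_le_card_of_forall_subsingleton
    (fun (s : Finset (P ⊕ P ⊕ P)) (q : G × G × G × G) => ∃ x y z : P, s = {in₀ x, in₁ y, in₂ z} ∧
      x.1 = q.1 ∧ y.1 = q.1 * f₁ q.2.1 ∧ z.1 = q.1 * f₃ q.2.2.2)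
  · intro s hs
    rw [SimpleGraph.mem_cliqueFinset_iff, SimpleGraph.is3Clique_iff] at hs
    obtain ⟨u, v, w, huv, huw, hvw, rfl⟩ := hs
    obtain ⟨x, y, z, e, hxy, hxz, hyz⟩ := graph_triple huv huw hvw
    obtain ⟨z', hz'⟩ := Graph.in₀₁_iff.1 hxy
    obtain ⟨y', hy'⟩ := Graph.in₀₂_iff.1 hxz
    obtain ⟨x', hx'⟩ := Graph.in₁₂_iff.1 hyz
    rw [hmem] at hz' hy' hx'
    obtain ⟨hx, a, ha, ea, -⟩ := hz'
    obtain ⟨-, c, hc, -, ec⟩ := hy'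
    obtain ⟨-, b, hb, eb, eb'⟩ := hx'
    rw [← mul_assoc, eb] at eb'
    rw [hS c hc] at ec
    refine ⟨(x.1, a, b, c), ?_, x, y, z, e.symm, rfl, ea.symm, ec.symm⟩
    simp only [hT, Finset.mem_product, Finset.mem_filter]
    refine ⟨hx, ⟨hSA ha, hSA hb, hSA hc⟩, ?_⟩
    apply mul_left_cancel (a := x.1)
    rw [← mul_assoc, ea, eb', ec]
  · rintro q - s ⟨-, x, y, z, rfl, hx, hy, hz⟩ s' ⟨-, x', y', z', rfl, hx', hy', hz'⟩
    rw [Subtype.ext (hx.trans hx'.symm), Subtype.ext (hy.trans hy'.symm),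
      Subtype.ext (hz.trans hz'.symm)]

theorem stmt_6 (K : ℝ) (hK : 1 ≤ K) (k m : ℕ) (hk : 0 < k) (hm : 0 < m)
    (ε : ℝ) (hε : 0 < ε) :
    ∃ η : ℝ, 0 < η ∧
      ∀ (G : Type) [Group G] [DecidableEq G] (A : Finset G),
        A.Nonempty →
        ((A * A * A).card : ℝ) ≤ K * A.card →
        ∀ f₁ f₂ f₃ : G → G,
          (∀ a ∈ A, f₁ a ∈ (A ∪ A⁻¹ ∪ {1}) ^ m) →
          (∀ a ∈ A, f₂ a ∈ (A ∪ A⁻¹ ∪ {1}) ^ m) →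
          (∀ a ∈ A, f₃ a ∈ (A ∪ A⁻¹ ∪ {1}) ^ m) →
          (∀ g : G, (A.filter (fun a => f₁ a = g)).card ≤ k) →
          (∀ g : G, (A.filter (fun a => f₂ a = g)).card ≤ k) →
          (∀ g : G, (A.filter (fun a => f₃ a = g)).card ≤ k) →
          ε * A.card ≤ ((A.filter (fun a => f₁ a * f₂ a = f₃ a)).card : ℝ) →
          η * (A.card : ℝ) ^ 2 ≤
            (Nat.card {p : G × G × G //
              p.1 ∈ A ∧ p.2.1 ∈ A ∧ p.2.2 ∈ A ∧ f₁ p.1 * f₂ p.2.1 = f₃ p.2.2} : ℝ) := by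
  obtain ⟨C, hC0, hC⟩ : ∃ C : ℝ, 0 < C ∧ C = 3 ^ (2 * m + 1) * K ^ (3 * (2 * m + 1 + 1)) :=
    ⟨_, by positivity, rfl⟩
  have hk' : (0:ℝ) < k := by exact_mod_cast hk
  obtain ⟨δ, hδ0, hδ⟩ : ∃ δ : ℝ, 0 < δ ∧ δ = ε / (k ^ 3 * (9 * C ^ 2)) :=
    ⟨_, by positivity, rfl⟩
  have hη := SimpleGraph.triangleRemovalBound_pos hδ0
  refine ⟨SimpleGraph.triangleRemovalBound δ, hη, ?_⟩
  intro G _ _ A hA htrip f₁ f₂ f₃ hf₁ hf₂ hf₃ hk₁ hk₂ hk₃ hS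
  set S := A.filter (fun a => f₁ a * f₂ a = f₃ a) with hSdef
  have hSA : S ⊆ A := Finset.filter_subset _ _
  obtain ⟨S₁, hS₁, hi₁, hc₁⟩ := exists_injOn_subset S A hSA f₁ k hk₁
  obtain ⟨S₂, hS₂, hi₂, hc₂⟩ := exists_injOn_subset S₁ A (hS₁.trans hSA) f₂ k hk₂
  obtain ⟨S₃, hS₃, hi₃, hc₃⟩ := exists_injOn_subset S₂ A (hS₂.trans (hS₁.trans hSA)) f₃ k hk₃
  have hc : S.card ≤ k ^ 3 * S₃.card := by
    calc S.card ≤ k * (k * (k * S₃.card)) :=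
          hc₁.trans (Nat.mul_le_mul_left _ (hc₂.trans (Nat.mul_le_mul_left _ hc₃)))
      _ = _ := by ring
  have hc' : (S.card : ℝ) ≤ k ^ 3 * S₃.card := by exact_mod_cast hc
  have hS₃S : S₃ ⊆ S := hS₃.trans (hS₂.trans hS₁)
  set B := A ∪ A⁻¹ ∪ {1} with hB
  have h1B : (1 : G) ∈ B := by simp [hB]
  have hAB : A ⊆ B := fun x hx => by simp [hB, hx]
  have hP : ((B ^ (2 * m + 1)).card : ℝ) ≤ C * A.card := by
    have := card_wordProd_mul_pow_le A hA K hK htrip (2 * m + 1) []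
    rw [hC]
    rw [← hB, show wordProd A [] = 1 from rfl, one_mul, List.length_nil, zero_add] at this
    exact this
  have hAP : A ⊆ B ^ (2 * m + 1) := by
    have := Finset.pow_subset_pow_right h1B (show 1 ≤ 2 * m + 1 by omega)
    rw [pow_one] at this
    exact hAB.trans this
  have hApos : (0:ℝ) < A.card := by exact_mod_cast hA.card_pos
  have key := triangle_count A S₃ (B ^ (2 * m + 1)) f₁ f₂ f₃ hAP (hS₃S.trans hSA)
    (by
      intro x hx a ha
      have h : x * f₁ a ∈ B ^ (1 + m) := by
        rw [pow_add, pow_one]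
        exact Finset.mul_mem_mul (hAB hx) (hf₁ a (hSA (hS₃S ha)))
      exact Finset.pow_subset_pow_right h1B (by omega) h)
    (by
      intro x hx a ha
      have h : x * (f₁ a * f₂ a) ∈ B ^ (1 + (m + m)) := by
        rw [pow_add, pow_one, pow_add]
        exact Finset.mul_mem_mul (hAB hx) (Finset.mul_mem_mul (hf₁ a (hSA (hS₃S ha)))
          (hf₂ a (hSA (hS₃S ha))))
      exact Finset.pow_subset_pow_right h1B (by omega) h)
    (hi₁.mono (by exact_mod_cast hS₃.trans hS₂)) (hi₂.mono (by exact_mod_cast hS₃)) hi₃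
    (fun a ha => (Finset.mem_filter.1 (hS₃S ha)).2) δ
    (by
      have h1 : ε * A.card ≤ k ^ 3 * S₃.card := hS.trans hc'
      calc δ * (3 * ((B ^ (2 * m + 1)).card : ℝ)) ^ 2 ≤ δ * (3 * (C * A.card)) ^ 2 := by gcongr
        _ = A.card * (ε * A.card / k ^ 3) := by rw [hδ]; field_simp; ring
        _ ≤ A.card * S₃.card := by
          gcongr
          rw [div_le_iff₀ (by positivity)]
          linarith)
  have hAPc : (A.card : ℝ) ≤ (B ^ (2 * m + 1)).card := by
    exact_mod_cast Finset.card_le_card hAP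
  have h2 : (A.card : ℝ) ≤ 3 * (B ^ (2 * m + 1)).card := by linarith
  refine le_of_mul_le_mul_left ?_ hApos
  refine le_trans ?_ key
  calc (A.card : ℝ) * (SimpleGraph.triangleRemovalBound δ * (A.card : ℝ) ^ 2)
      = SimpleGraph.triangleRemovalBound δ * (A.card : ℝ) ^ 3 := by ring
    _ ≤ _ := by gcongr
end

section
/- For every δ > 0 there exist η > 0 and ε > 0 such that for every finite group G and any three subsets A, B, C of G, each of size at least δ·|G|, which are in ε-regular position, the number of triples (a, b, c) ∈ A × B × C with a·b = c is strictly greater than η·|G|². -/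
open Pointwise

/-- Three finite subsets `A`, `B`, `C` of a group are in `ε`-regular position if for all
subsets `A₀ ⊆ A`, `B₀ ⊆ B`, `C₀ ⊆ C` of relative density at least `ε`, the set
`(A₀·A₀⁻¹·A₀)·(B₀·B₀⁻¹·B₀)` meets `C₀·C₀⁻¹·C₀`. -/
def RegularPosition {G : Type*} [Group G] [DecidableEq G]
    (A B C : Finset G) (ε : ℝ) : Prop :=
  ∀ A₀ ⊆ A, ∀ B₀ ⊆ B, ∀ C₀ ⊆ C,
    ε * A.card ≤ A₀.card → ε * B.card ≤ B₀.card → ε * C.card ≤ C₀.card →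
    ((A₀ * A₀⁻¹ * A₀) * (B₀ * B₀⁻¹ * B₀) ∩ (C₀ * C₀⁻¹ * C₀)).Nonempty

open Finset in
theorem sample_var {G : Type} [Fintype G] (g : G → ℝ) (h0 : ∑ x, g x = 0)
    (h1 : ∀ x, (g x) ^ 2 ≤ 1) (m : ℕ) :
    ∑ w : Fin m → G, (∑ i, g (w i)) ^ 2 ≤ m * (Fintype.card G : ℝ) ^ m := by
  induction m with
  | zero => simp
  | succ m ih =>
    rw [← (Fin.consEquiv (fun _ : Fin (m + 1) => G)).sum_comp, Fintype.sum_prod_type]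
    have e : ∀ (x : G) (w : Fin m → G),
        (∑ i, g ((Fin.consEquiv (fun _ : Fin (m + 1) => G)) (x, w) i)) ^ 2
          = (g x) ^ 2 + 2 * (g x * ∑ i, g (w i)) + (∑ i, g (w i)) ^ 2 := by
      intro x w
      rw [Fin.sum_univ_succ]
      simp [Fin.consEquiv]
      ring
    simp only [e, Finset.sum_add_distrib]
    have e2 : ∑ x : G, ∑ w : Fin m → G, 2 * (g x * ∑ i, g (w i)) = 0 := by
      simp only [← Finset.mul_sum, ← Finset.sum_mul, h0]
      simp
    rw [e2]
    have e3 : ∑ x : G, (g x) ^ 2 ≤ Fintype.card G := by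
      calc ∑ x : G, (g x) ^ 2 ≤ ∑ x : G, (1 : ℝ) := Finset.sum_le_sum fun x _ => h1 x
        _ = _ := by simp
    simp only [Finset.sum_const, Finset.card_univ, nsmul_eq_mul, ← Finset.mul_sum]
    rw [Fintype.card_fun, Fintype.card_fin]
    push_cast
    have hn : (0 : ℝ) ≤ Fintype.card G := by positivity
    have a1 := mul_le_mul_of_nonneg_left e3 (pow_nonneg hn m)
    have a2 := mul_le_mul_of_nonneg_left ih hn
    rw [pow_succ]
    nlinarith

/-- Normalised convolution of the indicator functions of `A` and `B`. -/
noncomputable def cv {G : Type} [Group G] [Fintype G] [DecidableEq G] (A B : Finset G) (y : G) : ℝ :=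
  (∑ w, if y * w⁻¹ ∈ A ∧ w ∈ B then (1 : ℝ) else 0) / Fintype.card G

/-- Right translate of the convolution as an `L²` vector. -/
noncomputable def cvR {G : Type} [Group G] [Fintype G] [DecidableEq G] (A B : Finset G) (x : G) :
    EuclideanSpace ℝ G := WithLp.toLp 2 (fun y => cv A B (y * x))

section
variable {G : Type} [Group G] [Fintype G] [DecidableEq G] (A B : Finset G)

theorem cardG_pos : (0 : ℝ) < Fintype.card G := by exact_mod_cast Fintype.card_pos

theorem cv_nonneg (y : G) : 0 ≤ cv A B y := by
  unfold cv
  apply div_nonneg _ (by positivity)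
  exact Finset.sum_nonneg fun w _ => by split_ifs <;> norm_num

theorem cv_le_one (y : G) : cv A B y ≤ 1 := by
  unfold cv
  rw [div_le_one cardG_pos]
  calc _ ≤ ∑ w : G, (1 : ℝ) := Finset.sum_le_sum fun w _ => by split_ifs <;> norm_num
    _ = _ := by simp

theorem cv_sum (F : G → ℝ) :
    ∑ a ∈ A, ∑ b ∈ B, F (a * b) = Fintype.card G * ∑ y, cv A B y * F y := by
  have hn := (cardG_pos (G := G)).ne'
  have : ∀ y, cv A B y * F y =
      (∑ w, if y * w⁻¹ ∈ A ∧ w ∈ B then F y else 0) / Fintype.card G := by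
    intro y
    unfold cv
    rw [div_mul_eq_mul_div, Finset.sum_mul]
    congr 1
    exact Finset.sum_congr rfl fun w _ => by split_ifs <;> simp
  simp only [this, ← Finset.sum_div]
  rw [mul_div_cancel₀ _ hn, Finset.sum_comm, Finset.sum_comm (s := Finset.univ),
    ← Finset.sum_filter_add_sum_filter_not Finset.univ (fun w => w ∈ B),
    Finset.filter_univ_mem]
  have z : ∑ w ∈ Finset.univ.filter (fun w => ¬ w ∈ B),
      ∑ y, (if y * w⁻¹ ∈ A ∧ w ∈ B then F y else 0) = 0 := by
    refine Finset.sum_eq_zero fun w hw => Finset.sum_eq_zero fun y _ => ?_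
    have := (Finset.mem_filter.1 hw).2
    simp [this]
  rw [z, add_zero]
  refine Finset.sum_congr rfl fun w hw => ?_
  rw [← Equiv.sum_comp (Equiv.mulRight w)]
  simp [hw]

theorem cvR_dist_sq (x x' : G) :
    dist (cvR A B x) (cvR A B x') ^ 2 = ∑ y, (cv A B (y * x) - cv A B (y * x')) ^ 2 := by
  rw [EuclideanSpace.dist_eq, Real.sq_sqrt (Finset.sum_nonneg fun _ _ => by positivity)]
  simp [cvR, Real.dist_eq, sq_abs]

theorem cvR_dist_left (g x x' : G) :
    dist (cvR A B (g * x)) (cvR A B (g * x')) = dist (cvR A B x) (cvR A B x') := by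
  have : dist (cvR A B (g * x)) (cvR A B (g * x')) ^ 2 = dist (cvR A B x) (cvR A B x') ^ 2 := by
    rw [cvR_dist_sq, cvR_dist_sq, ← Equiv.sum_comp (Equiv.mulRight g) (fun y => (cv A B (y * x) - cv A B (y * x')) ^ 2)]
    simp [mul_assoc]
  exact (sq_eq_sq₀ dist_nonneg dist_nonneg).1 this

theorem cv_eq (x y : G) : cv A B (y * x) =
    (∑ w, if y * w⁻¹ ∈ A ∧ w * x ∈ B then (1 : ℝ) else 0) / Fintype.card G := by
  unfold cv
  rw [← Equiv.sum_comp (Equiv.mulRight x)]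
  simp [mul_assoc]

theorem separated_card (r : ℝ) (m : ℕ) (hm : 0 < m) (hr : 8 ≤ r ^ 2 * m)
    (S : Finset G) (hS : ∀ x ∈ S, ∀ x' ∈ S, x ≠ x' →
      r ^ 2 * Fintype.card G < dist (cvR A B x) (cvR A B x') ^ 2) :
    S.card ≤ 2 ^ (m + 1) := by
  classical
  set n : ℝ := (Fintype.card G : ℝ) with hn
  have hnpos : 0 < n := cardG_pos
  have hmpos : (0 : ℝ) < m := by exact_mod_cast hm
  let s : (Fin m → G) → G → G → ℝ := fun w x y =>
    ∑ i, if y * (w i)⁻¹ ∈ A ∧ w i * x ∈ B then (1 : ℝ) else 0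
  let E : (Fin m → G) → G → ℝ := fun w x => ∑ y, (s w x y - m * cv A B (y * x)) ^ 2
  have h1 : ∀ x y, ∑ w, (s w x y - m * cv A B (y * x)) ^ 2 ≤ m * n ^ m := by
    intro x y
    have := sample_var (fun w : G => (if y * w⁻¹ ∈ A ∧ w * x ∈ B then (1 : ℝ) else 0)
      - cv A B (y * x)) (by
        rw [Finset.sum_sub_distrib, cv_eq]
        simp only [Finset.sum_const, Finset.card_univ, nsmul_eq_mul]
        rw [mul_div_cancel₀ _ hnpos.ne']
        simp) (by
        intro w
        have a := cv_nonneg A B (y * x)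
        have b := cv_le_one A B (y * x)
        split_ifs <;> nlinarith) m
    simpa [s, Finset.sum_sub_distrib] using this
  have h2 : ∑ w, ∑ x ∈ S, E w x ≤ ∑ w : Fin m → G, S.card * n * m := by
    rw [Finset.sum_comm]
    have : ∀ x ∈ S, ∑ w, E w x ≤ n * (m * n ^ m) := by
      intro x _
      simp only [E]
      rw [Finset.sum_comm]
      calc _ ≤ ∑ y : G, m * n ^ m := Finset.sum_le_sum fun y _ => h1 x y
        _ = _ := by simp [hn]
    calc _ ≤ ∑ x ∈ S, n * (m * n ^ m) := Finset.sum_le_sum this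
      _ = _ := by
        simp [← hn]
        ring
  obtain ⟨w, -, hw⟩ := Finset.exists_le_of_sum_le (Finset.univ_nonempty) h2
  let S' := S.filter fun x => E w x ≤ 2 * n * m
  have hEn : ∀ x, 0 ≤ E w x := fun x => Finset.sum_nonneg fun _ _ => by positivity
  have h3 : S.card ≤ 2 * S'.card := by
    have hs := Finset.card_filter_add_card_filter_not (s := S) (fun x => E w x ≤ 2 * n * m)
    have hb : ((S.filter fun x => ¬ E w x ≤ 2 * n * m).card : ℝ) * (2 * n * m) ≤ S.card * n * m := by
      calc _ = ∑ x ∈ S.filter (fun x => ¬ E w x ≤ 2 * n * m), 2 * n * m := by simp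
        _ ≤ ∑ x ∈ S.filter (fun x => ¬ E w x ≤ 2 * n * m), E w x :=
          Finset.sum_le_sum fun x hx => (not_le.1 (Finset.mem_filter.1 hx).2).le
        _ ≤ ∑ x ∈ S, E w x := Finset.sum_le_sum_of_subset_of_nonneg (Finset.filter_subset _ _)
          fun x _ _ => hEn x
        _ ≤ _ := hw
    have hb2 : ((S.filter fun x => ¬ E w x ≤ 2 * n * m).card : ℝ) * 2 ≤ S.card := by
      have : 0 < n * m := by positivity
      refine le_of_mul_le_mul_right ?_ this
      nlinarith
    have hb3 : (S.filter fun x => ¬ E w x ≤ 2 * n * m).card * 2 ≤ S.card := by exact_mod_cast hb2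
    change _ ≤ 2 * (S.filter fun x => E w x ≤ 2 * n * m).card
    omega
  have h4 : S'.card ≤ 2 ^ m := by
    have := Finset.card_le_card_of_injOn (s := S') (t := (Finset.univ : Finset (Fin m → Bool)))
      (fun x i => decide (w i * x ∈ B)) (by simp) (by
        intro x hx x' hx' hxx
        by_contra hne
        have hx := Finset.mem_filter.1 hx
        have hx' := Finset.mem_filter.1 hx'
        have hd := hS x hx.1 x' hx'.1 hne
        rw [cvR_dist_sq] at hd
        have hss : ∀ y, s w x y = s w x' y := by
          intro y
          refine Finset.sum_congr rfl fun i _ => ?_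
          have : (w i * x ∈ B) ↔ (w i * x' ∈ B) := by simpa using congrFun hxx i
          simp [this]
        have : (m : ℝ) ^ 2 * ∑ y, (cv A B (y * x) - cv A B (y * x')) ^ 2
            ≤ 2 * E w x + 2 * E w x' := by
          simp only [E, Finset.mul_sum]
          rw [← Finset.sum_add_distrib]
          refine Finset.sum_le_sum fun y _ => ?_
          rw [hss y]
          nlinarith [sq_nonneg ((s w x' y - m * cv A B (y * x)) + (s w x' y - m * cv A B (y * x')))]
        have h5 : (m : ℝ) ^ 2 * (r ^ 2 * n) < 8 * n * m := by
          have : (m : ℝ) ^ 2 * (r ^ 2 * n) < (m : ℝ) ^ 2 * ∑ y, (cv A B (y * x) - cv A B (y * x')) ^ 2 :=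
            mul_lt_mul_of_pos_left hd (by positivity)
          linarith [hx.2, hx'.2]
        have : 0 < n * m := by positivity
        nlinarith)
    simpa using this
  rw [pow_succ]; omega

theorem exists_centers (r : ℝ) (m : ℕ) (hm : 0 < m) (hr : 8 ≤ r ^ 2 * m) (hr0 : 0 ≤ r) :
    ∃ (S : Finset G) (φ : G → G), S.card ≤ 2 ^ (m + 1) ∧ (∀ x, φ x ∈ S) ∧
      ∀ x, dist (cvR A B x) (cvR A B (φ x)) ≤ r * √(Fintype.card G) := by
  classical
  let P : Finset G → Prop := fun S => ∀ x ∈ S, ∀ x' ∈ S, x ≠ x' →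
      r ^ 2 * Fintype.card G < dist (cvR A B x) (cvR A B x') ^ 2
  obtain ⟨S, hS, hmax⟩ := Finset.exists_max_image
    ((Finset.univ : Finset (Finset G)).filter P) Finset.card ⟨∅, by simp [P]⟩
  have hS : P S := (Finset.mem_filter.1 hS).2
  have : ∀ x, ∃ z ∈ S, dist (cvR A B x) (cvR A B z) ≤ r * √(Fintype.card G) := by
    intro x
    by_contra! hcon
    have hsq : ∀ z ∈ S, r ^ 2 * Fintype.card G < dist (cvR A B x) (cvR A B z) ^ 2 := by
      intro z hz
      have := pow_lt_pow_left₀ (hcon z hz) (by positivity) (two_ne_zero)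
      rwa [mul_pow, Real.sq_sqrt (by positivity)] at this
    have hx : x ∉ S := by
      intro hx
      have := hcon x hx
      rw [dist_self] at this
      have : 0 ≤ r * √(Fintype.card G) := by positivity
      linarith
    have := hmax (insert x S) (by
      simp only [Finset.mem_filter, Finset.mem_univ, true_and]
      intro y hy z hz hyz
      rcases Finset.mem_insert.1 hy with rfl | hy2
      · rcases Finset.mem_insert.1 hz with rfl | hz
        · exact absurd rfl hyz
        · exact hsq z hz
      · rcases Finset.mem_insert.1 hz with rfl | hz
        · rw [dist_comm]; exact hsq y hy2
        · exact hS y hy2 z hz hyz)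
    rw [Finset.card_insert_of_notMem hx] at this
    omega
  choose φ h1 h2 using this
  exact ⟨S, φ, separated_card A B r m hm hr S hS, h1, h2⟩

theorem few_bad (C : Finset G) (r κ : ℝ) (hκ : 0 < κ) (m : ℕ) (hm : 0 < m) (hr : 8 ≤ r ^ 2 * m)
    (hr0 : 0 ≤ r) (hreg : RegularPosition A B C (κ / ((2 : ℝ) ^ (m + 1)) ^ 3)) :
    (((A ×ˢ B ×ˢ C).filter fun p => 12 * (r * √(Fintype.card G)) <
      dist (cvR A B (p.1 * p.2.1)) (cvR A B p.2.2)).card : ℝ) ≤ κ * (Fintype.card G : ℝ) ^ 3 := by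
  classical
  obtain ⟨S, φ, hScard, hφS, hφ⟩ := exists_centers A B r m hm hr hr0
  set n : ℝ := (Fintype.card G : ℝ) with hn
  have hnpos : 0 < n := cardG_pos
  set q := r * √n with hq
  set bad := (A ×ˢ B ×ˢ C).filter fun p => 12 * q <
      dist (cvR A B (p.1 * p.2.1)) (cvR A B p.2.2) with hbad
  by_contra! hlt
  set K : ℝ := (2 : ℝ) ^ (m + 1) with hK
  have hKpos : 0 < K := by positivity
  have hSK : (S.card : ℝ) ≤ K := by rw [hK]; exact_mod_cast hScard
  set t := κ * n ^ 3 / K ^ 3 with ht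
  have htpos : 0 < t := by positivity
  obtain ⟨⟨a0, b0, c0⟩, -, hfib⟩ := Finset.exists_le_card_fiber_of_nsmul_le_card_of_maps_to
    (s := bad) (t := S ×ˢ S ×ˢ S) (f := fun p => (φ (p.1 * φ p.2.1), φ p.2.1, φ p.2.2)) (b := t)
    (by intro p _; simp [hφS]) ⟨(φ 1, φ 1, φ 1), by simp [hφS]⟩ (by
      simp only [Finset.card_product, nsmul_eq_mul]
      push_cast
      have : (S.card : ℝ) * (S.card * S.card) ≤ K ^ 3 := by
        calc (S.card : ℝ) * (S.card * S.card) = (S.card : ℝ) ^ 3 := by ring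
          _ ≤ K ^ 3 := by gcongr
      calc _ ≤ K ^ 3 * t := by gcongr
        _ = κ * n ^ 3 := by rw [ht]; field_simp
        _ ≤ _ := hlt.le)
  set A₀ := A.filter fun a => φ (a * b0) = a0 with hA₀
  set B₀ := B.filter fun b => φ b = b0 with hB₀
  set C₀ := C.filter fun c => φ c = c0 with hC₀
  have hsub : (bad.filter fun p => (φ (p.1 * φ p.2.1), φ p.2.1, φ p.2.2) = (a0, b0, c0)) ⊆
      A₀ ×ˢ B₀ ×ˢ C₀ := by
    rintro ⟨a, b, c⟩ h
    simp only [hbad, Finset.mem_filter, Finset.mem_product, Prod.mk.injEq] at h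
    obtain ⟨⟨⟨ha, hb, hc⟩, -⟩, h1, h2, h3⟩ := h
    simp only [hA₀, hB₀, hC₀, Finset.mem_filter, Finset.mem_product]
    rw [h2] at h1
    exact ⟨⟨ha, h1⟩, ⟨hb, h2⟩, ⟨hc, h3⟩⟩
  have hprod : t ≤ A₀.card * (B₀.card * C₀.card : ℝ) := by
    have := Finset.card_le_card hsub
    rw [Finset.card_product, Finset.card_product] at this
    refine hfib.trans ?_
    exact_mod_cast this
  have hle : ∀ X : Finset G, (X.card : ℝ) ≤ n := fun X => by
    rw [hn]; exact_mod_cast Finset.card_le_univ X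
  have hdens : ∀ X X₀ : Finset G, t ≤ X₀.card * n ^ 2 → κ / K ^ 3 * X.card ≤ X₀.card := by
    intro X X₀ h
    have h1 : κ / K ^ 3 * n ≤ X₀.card := by
      refine le_of_mul_le_mul_right (a := n ^ 2) ?_ (by positivity)
      calc _ = t := by rw [ht]; ring
        _ ≤ _ := h
    refine le_trans ?_ h1
    have := hle X
    gcongr
  have hA := hdens A A₀ (hprod.trans (by
    have := hle B₀; have := hle C₀
    calc (A₀.card * (B₀.card * C₀.card) : ℝ) ≤ A₀.card * (n * n) := by gcongr
      _ = _ := by ring))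
  have hB := hdens B B₀ (hprod.trans (by
    have := hle A₀; have := hle C₀
    calc (A₀.card * (B₀.card * C₀.card) : ℝ) ≤ n * (B₀.card * n) := by gcongr
      _ = _ := by ring))
  have hC := hdens C C₀ (hprod.trans (by
    have := hle B₀; have := hle A₀
    calc (A₀.card * (B₀.card * C₀.card) : ℝ) ≤ n * (n * C₀.card) := by gcongr
      _ = _ := by ring))
  obtain ⟨z, hz⟩ := hreg A₀ (Finset.filter_subset _ _) B₀ (Finset.filter_subset _ _)
    C₀ (Finset.filter_subset _ _) hA hB hC
  have hne : 0 < (bad.filter fun p =>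
      (φ (p.1 * φ p.2.1), φ p.2.1, φ p.2.2) = (a0, b0, c0)).card := by
    have := htpos.trans_le hfib
    exact_mod_cast this
  obtain ⟨⟨a, b, c⟩, habc⟩ := Finset.card_pos.1 hne
  have hmem := hsub habc
  have hbadp := (Finset.mem_filter.1 (Finset.mem_filter.1 habc).1).2
  simp only [Finset.mem_product] at hmem
  obtain ⟨ha, hb, hc⟩ := hmem
  simp only [Finset.mem_inter, Finset.mem_mul, Finset.mem_inv] at hz
  obtain ⟨⟨X, ⟨_, ⟨a1, ha1, _, ⟨a2, ha2, rfl⟩, rfl⟩, a3, ha3, rfl⟩,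
    Y, ⟨_, ⟨b1, hb1, _, ⟨b2, hb2, rfl⟩, rfl⟩, b3, hb3, rfl⟩, hXY⟩,
    ⟨_, ⟨c1, hc1, _, ⟨c2, hc2, rfl⟩, rfl⟩, c3, hc3, hZ⟩⟩ := hz
  let d : G → G → ℝ := fun x y => dist (cvR A B x) (cvR A B y)
  have tri : ∀ x y z, d x z ≤ d x y + d y z := fun x y z => dist_triangle _ _ _
  have sym : ∀ x y, d x y = d y x := fun x y => dist_comm _ _
  have inv : ∀ g x y, d (g * x) (g * y) = d x y := fun g x y => cvR_dist_left A B g x y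
  have dA : ∀ x ∈ A₀, d (x * b0) a0 ≤ q := by
    intro x hx
    have h := hφ (x * b0)
    rwa [(Finset.mem_filter.1 hx).2] at h
  have dB : ∀ x ∈ B₀, d x b0 ≤ q := by
    intro x hx
    have h := hφ x
    rwa [(Finset.mem_filter.1 hx).2] at h
  have dC : ∀ x ∈ C₀, d x c0 ≤ q := by
    intro x hx
    have h := hφ x
    rwa [(Finset.mem_filter.1 hx).2] at h
  have three : ∀ x1 x2 x3 x0 u : G, d (x1 * u) x0 ≤ q → d (x2 * u) x0 ≤ q → d (x3 * u) x0 ≤ q →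
      d (x1 * x2⁻¹ * x3 * u) x0 ≤ 3 * q := by
    intro x1 x2 x3 x0 u h1 h2 h3
    have e := inv (x1 * x2⁻¹) (x3 * u) (x2 * u)
    have e1 : x1 * x2⁻¹ * (x3 * u) = x1 * x2⁻¹ * x3 * u := by group
    have e2 : x1 * x2⁻¹ * (x2 * u) = x1 * u := by group
    rw [e1, e2] at e
    have := tri (x1 * x2⁻¹ * x3 * u) (x1 * u) x0
    have := tri (x3 * u) x0 (x2 * u)
    have := sym x0 (x2 * u)
    linarith
  have tA := three a1 a2 a3 a0 b0 (dA _ ha1) (dA _ ha2) (dA _ ha3)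
  have tB := three b1 b2 b3 b0 1 (by simpa using dB _ hb1) (by simpa using dB _ hb2)
    (by simpa using dB _ hb3)
  have tC := three c1 c2 c3 c0 1 (by simpa using dC _ hc1) (by simpa using dC _ hc2)
    (by simpa using dC _ hc3)
  rw [mul_one] at tB tC
  rw [hZ] at tC
  have i1 := inv (a1 * a2⁻¹ * a3) (b1 * b2⁻¹ * b3) b0
  rw [hXY] at i1
  have i2 := inv a b b0
  have e1 := dA a ha
  have e2 := dB b hb
  have e3 := dC c hc
  have t1 := tri (a * b) (a * b0) c
  have t2 := tri (a * b0) a0 c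
  have t3 := tri a0 (a1 * a2⁻¹ * a3 * b0) c
  have t4 := tri (a1 * a2⁻¹ * a3 * b0) z c
  have t5 := tri z c0 c
  have s1 := sym a0 (a1 * a2⁻¹ * a3 * b0)
  have s2 := sym (a1 * a2⁻¹ * a3 * b0) z
  have s3 := sym c0 c
  have : 12 * q < d (a * b) c := hbadp
  linarith

theorem good_sum (ρ : ℝ) :
    ∑ p : G × G × G, (if dist (cvR A B (p.1 * p.2.1)) (cvR A B p.2.2) ≤ ρ * √(Fintype.card G)
      then (cv A B (p.1 * p.2.1) - cv A B p.2.2) ^ 2 else 0) ≤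
      ρ ^ 2 * (Fintype.card G : ℝ) ^ 3 := by
  classical
  set n : ℝ := (Fintype.card G : ℝ) with hn
  have hnpos : 0 < n := cardG_pos
  let W : G → G → ℝ := fun y z => if dist (cvR A B y) (cvR A B z) ≤ ρ * √n
      then (cv A B y - cv A B z) ^ 2 else 0
  have h1 : ∑ p : G × G × G, W (p.1 * p.2.1) p.2.2 = n * ∑ y, ∑ z, W y z := by
    rw [Fintype.sum_prod_type]
    have : ∀ a : G, ∑ p : G × G, W (a * p.1) p.2 = ∑ y, ∑ z, W y z := by
      intro a
      rw [Fintype.sum_prod_type, ← Equiv.sum_comp (Equiv.mulLeft a) (fun y => ∑ z, W y z)]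
      rfl
    simp [this, hn]
  have h2 : ∑ y, ∑ z, W y z = ∑ t, ∑ y, W y (y * t) := by
    rw [Finset.sum_comm (s := (Finset.univ : Finset G)) (f := fun t y => W y (y * t))]
    refine Finset.sum_congr rfl fun y _ => ?_
    rw [← Equiv.sum_comp (Equiv.mulLeft y)]
    rfl
  have h3 : ∀ t, ∑ y, W y (y * t) ≤ ρ ^ 2 * n := by
    intro t
    have hd : ∀ y, dist (cvR A B y) (cvR A B (y * t)) = dist (cvR A B 1) (cvR A B t) := by
      intro y
      have := cvR_dist_left A B y 1 t
      rwa [mul_one] at this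
    simp only [W, hd]
    split_ifs with h
    · have e := cvR_dist_sq A B 1 t
      simp only [mul_one] at e
      rw [← e]
      calc _ ≤ (ρ * √n) ^ 2 := by gcongr
        _ = _ := by rw [mul_pow, Real.sq_sqrt hnpos.le]
    · simp; positivity
  change ∑ p : G × G × G, W (p.1 * p.2.1) p.2.2 ≤ _
  rw [h1, h2]
  calc _ ≤ n * ∑ t : G, ρ ^ 2 * n := by gcongr with t; exact h3 t
    _ = _ := by simp [← hn]; ring

end

theorem stmt_9 (δ : ℝ) (hδ : 0 < δ) :
    ∃ η : ℝ, 0 < η ∧ ∃ ε : ℝ, 0 < ε ∧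
      ∀ (G : Type) [Group G] [Fintype G] [DecidableEq G] (A B C : Finset G),
        δ * Fintype.card G ≤ A.card →
        δ * Fintype.card G ≤ B.card →
        δ * Fintype.card G ≤ C.card →
        RegularPosition A B C ε →
        η * (Fintype.card G : ℝ) ^ 2 <
          (Nat.card {p : G × G × G //
            p.1 ∈ A ∧ p.2.1 ∈ B ∧ p.2.2 ∈ C ∧ p.1 * p.2.1 = p.2.2} : ℝ) := by
  set κ : ℝ := δ ^ 5 / 8 with hκ
  have hκpos : 0 < κ := by positivity
  obtain ⟨m, hm⟩ := exists_nat_gt (8 / (κ / 12) ^ 2)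
  have hm0 : 0 < m := by
    have : (0 : ℝ) < m := lt_trans (by positivity) hm
    exact_mod_cast this
  have hr : 8 ≤ (κ / 12) ^ 2 * m := by
    rw [div_lt_iff₀ (by positivity)] at hm
    linarith
  refine ⟨κ, hκpos, κ / ((2 : ℝ) ^ (m + 1)) ^ 3, by positivity, ?_⟩
  intro G _ _ _ A B C hA hB hC hreg
  have hfew := few_bad A B C (κ / 12) κ hκpos m hm0 hr (by positivity) hreg
  have hgood := good_sum A B κ
  set n : ℝ := (Fintype.card G : ℝ) with hn
  have hnpos : 0 < n := cardG_pos
  by_contra! hcount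
  -- the number of solutions
  have hT : (Nat.card {p : G × G × G //
      p.1 ∈ A ∧ p.2.1 ∈ B ∧ p.2.2 ∈ C ∧ p.1 * p.2.1 = p.2.2} : ℝ) = n * ∑ c ∈ C, cv A B c := by
    have e := cv_sum A B (fun y => if y ∈ C then (1 : ℝ) else 0)
    have e2 : ∑ c ∈ C, cv A B c = ∑ y, cv A B y * (if y ∈ C then (1 : ℝ) else 0) := by
      simp
    rw [e2, ← e, ← Finset.sum_product', Finset.sum_boole, Nat.cast_inj,
      Nat.card_eq_fintype_card, Fintype.card_subtype]
    refine Finset.card_bij (fun p _ => (p.1, p.2.1)) ?_ ?_ ?_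
    · rintro ⟨a, b, c⟩ h
      simp only [Finset.mem_filter, Finset.mem_univ, true_and] at h
      obtain ⟨h1, h2, h3, h4⟩ := h
      simp [h1, h2, h4, h3]
    · rintro ⟨a, b, c⟩ h ⟨a', b', c'⟩ h' he
      simp only [Finset.mem_filter, Finset.mem_univ, true_and] at h h'
      simp only [Prod.mk.injEq] at he
      obtain ⟨rfl, rfl⟩ := he
      rw [← h.2.2.2, ← h'.2.2.2]
    · rintro ⟨a, b⟩ h
      simp only [Finset.mem_filter, Finset.mem_product] at h
      exact ⟨(a, b, a * b), by simp [h.1.1, h.1.2, h.2], rfl⟩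
  rw [hT] at hcount
  have hfc : ∑ c ∈ C, cv A B c ≤ κ * n := by
    refine le_of_mul_le_mul_left (a := n) ?_ hnpos
    linarith
  have hsum1 : (A.card : ℝ) * B.card = n * ∑ y, cv A B y := by
    have e := cv_sum A B (fun _ => 1)
    simpa using e
  have hfs : δ ^ 2 * n ≤ ∑ y, cv A B y := by
    refine le_of_mul_le_mul_left (a := n) ?_ hnpos
    rw [← hsum1]
    calc n * (δ ^ 2 * n) = (δ * n) * (δ * n) := by ring
      _ ≤ _ := by gcongr
  have hfs2 : δ ^ 4 * n ≤ ∑ y, cv A B y * cv A B y := by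
    have cs := sq_sum_le_card_mul_sum_sq (s := (Finset.univ : Finset G)) (f := fun y => cv A B y)
    rw [Finset.card_univ, ← hn] at cs
    refine le_of_mul_le_mul_left (a := n) ?_ hnpos
    calc n * (δ ^ 4 * n) = (δ ^ 2 * n) ^ 2 := by ring
      _ ≤ (∑ y, cv A B y) ^ 2 := by gcongr
      _ ≤ _ := cs
      _ = _ := by simp only [sq]
  have hle : ∀ X : Finset G, (X.card : ℝ) ≤ n := fun X => by
    rw [hn]; exact_mod_cast Finset.card_le_univ X
  -- lower bound
  have hlow : δ ^ 5 * n ^ 3 - κ * n ^ 3 ≤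
      ∑ p ∈ A ×ˢ B ×ˢ C, (cv A B (p.1 * p.2.1) - cv A B p.2.2) := by
    have e := cv_sum A B (cv A B)
    have e1 : ∑ p ∈ A ×ˢ B ×ˢ C, cv A B (p.1 * p.2.1)
        = C.card * (n * ∑ y, cv A B y * cv A B y) := by
      rw [← e]
      simp only [Finset.sum_product, Finset.sum_const, nsmul_eq_mul, ← Finset.mul_sum]
    have e2 : ∑ p ∈ A ×ˢ B ×ˢ C, cv A B p.2.2 = A.card * (B.card * ∑ c ∈ C, cv A B c) := by
      simp only [Finset.sum_product, Finset.sum_const, nsmul_eq_mul]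
    rw [Finset.sum_sub_distrib, e1, e2]
    have l1 : δ ^ 5 * n ^ 3 ≤ C.card * (n * ∑ y, cv A B y * cv A B y) := by
      calc δ ^ 5 * n ^ 3 = (δ * n) * (n * (δ ^ 4 * n)) := by ring
        _ ≤ _ := by gcongr
    have l2 : A.card * (B.card * ∑ c ∈ C, cv A B c) ≤ κ * n ^ 3 := by
      have := hle A
      have := hle B
      have : 0 ≤ ∑ c ∈ C, cv A B c := Finset.sum_nonneg fun c _ => cv_nonneg A B c
      calc A.card * (B.card * ∑ c ∈ C, cv A B c) ≤ n * (n * (κ * n)) := by gcongr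
        _ = _ := by ring
    linarith
  -- upper bound
  let W : G × G × G → ℝ := fun p =>
    if dist (cvR A B (p.1 * p.2.1)) (cvR A B p.2.2) ≤ κ * √n
      then (cv A B (p.1 * p.2.1) - cv A B p.2.2) ^ 2 else 0
  have hW : ∀ p, 0 ≤ W p := fun p => by simp only [W]; split_ifs <;> positivity
  have hpt : ∀ p ∈ A ×ˢ B ×ˢ C, cv A B (p.1 * p.2.1) - cv A B p.2.2 ≤
      (if 12 * (κ / 12 * √n) < dist (cvR A B (p.1 * p.2.1)) (cvR A B p.2.2) then (1 : ℝ) else 0)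
        + (κ + W p / κ) := by
    intro p _
    have hp := hW p
    split_ifs with h
    · have := cv_le_one A B (p.1 * p.2.1)
      have := cv_nonneg A B p.2.2
      have : 0 ≤ W p / κ := by positivity
      linarith
    · have h' : dist (cvR A B (p.1 * p.2.1)) (cvR A B p.2.2) ≤ κ * √n := by
        rw [not_lt] at h; linarith
      simp only [W, if_pos h']
      set u := cv A B (p.1 * p.2.1) - cv A B p.2.2
      rw [zero_add]
      have : κ + u ^ 2 / κ - u = ((κ - u) ^ 2 + κ * u) / κ := by field_simp; ring
      have h2 : u ≤ κ + u ^ 2 / κ := by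
        rcases le_total u 0 with hu | hu
        · have : 0 ≤ u ^ 2 / κ := by positivity
          linarith
        · have : 0 ≤ ((κ - u) ^ 2 + κ * u) / κ := by positivity
          linarith
      exact h2
  have hup := Finset.sum_le_sum hpt
  rw [Finset.sum_add_distrib, Finset.sum_boole, Finset.sum_add_distrib] at hup
  have u1 : ∑ p ∈ A ×ˢ B ×ˢ C, κ ≤ κ * n ^ 3 := by
    simp only [Finset.sum_const, nsmul_eq_mul, Finset.card_product]
    push_cast
    have := hle A
    have := hle B
    have := hle C
    calc _ ≤ (n * (n * n)) * κ := by gcongr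
      _ = _ := by ring
  have u2 : ∑ p ∈ A ×ˢ B ×ˢ C, W p / κ ≤ κ * n ^ 3 := by
    rw [← Finset.sum_div (A ×ˢ B ×ˢ C) W κ, div_le_iff₀ hκpos]
    calc _ ≤ ∑ p, W p := Finset.sum_le_sum_of_subset_of_nonneg (Finset.subset_univ _)
          fun p _ _ => hW p
      _ ≤ κ ^ 2 * n ^ 3 := hgood
      _ = _ := by ring
  have hn3 : 0 < κ * n ^ 3 := by positivity
  have h8 : δ ^ 5 * n ^ 3 = 8 * (κ * n ^ 3) := by rw [hκ]; ring
  linarith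
end

section
/- Fix a natural number n ≥ 2 and, for every nonempty subset F of {1,...,n}, a real number δ_F > 0. There exist ε = ε(n, (δ_F)) > 0 and η = η(n, (δ_F)) > 0 such that for every finite group G and every family of subsets A_F ⊆ G with |A_F| ≥ δ_F·|G| for each nonempty F ⊆ {1,...,n}, such that each A_F is product-rich up to ε, the number of tuples (a_1,...,a_n) ∈ G^n with a_F ∈ A_F for all nonempty F ⊆ {1,...,n} is at least η·|G|^n. -/
open Pointwise

/-- A finite subset `A` of a group is product-rich up to `ε` if `A₀·A₀` meets `A₀`
whenever `A₀ ⊆ A` has relative density at least `ε` in `A`. -/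
def ProductRich {G : Type*} [Group G] [DecidableEq G] (A : Finset G) (ε : ℝ) : Prop :=
  ∀ A₀ ⊆ A, ε * A.card ≤ A₀.card → (A₀ * A₀ ∩ A₀).Nonempty

/-- Richness measured relative to the whole group. -/
def RichIn {G : Type} [Group G] [Fintype G] (A : Finset G) (ε : ℝ) : Prop :=
  ∀ A₀ ⊆ A, ε * Fintype.card G ≤ A₀.card → ∃ x ∈ A₀, ∃ y ∈ A₀, x * y ∈ A₀

lemma RichIn.mono {G : Type} [Group G] [Fintype G] {A B : Finset G} {ε ε' : ℝ}
    (h : RichIn A ε) (hB : B ⊆ A) (he : ε ≤ ε') : RichIn B ε' := by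
  intro A₀ h0 h1
  refine h A₀ (h0.trans hB) (le_trans ?_ h1)
  gcongr

/-- Greedy sampling (Maurey's argument). -/
lemma maurey {G ι : Type} [Fintype G] [Nonempty G] [Fintype ι] (Y : G → ι → ℝ)
    (hY : ∀ i, ∑ u, Y u i = 0) (M : ℝ)
    (hM : ∑ u, ∑ i, (Y u i) ^ 2 ≤ M * Fintype.card G) (k : ℕ) :
    ∃ u : Fin k → G, ∑ i, (∑ j, Y (u j) i) ^ 2 ≤ k * M := by
  induction k with
  | zero => exact ⟨fun i => i.elim0, by simp⟩
  | succ k ih =>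
    obtain ⟨u, hu⟩ := ih
    set e : ι → ℝ := fun i => ∑ j, Y (u j) i with he
    have h1 : ∑ g, ∑ i, (Y g i + e i) ^ 2
        = ∑ g, ∑ i, (Y g i) ^ 2 + Fintype.card G * ∑ i, e i ^ 2 := by
      have : ∀ g i, (Y g i + e i) ^ 2 = Y g i ^ 2 + e i ^ 2 + Y g i * (2 * e i) := by
        intros; ring
      simp only [this, Finset.sum_add_distrib]
      have h2 : ∑ g, ∑ i, Y g i * (2 * e i) = 0 := by
        rw [Finset.sum_comm]
        simp [← Finset.sum_mul, hY]
      rw [h2]; simp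
    obtain ⟨g, -, hg⟩ : ∃ g ∈ (Finset.univ : Finset G),
        ∑ i, (Y g i + e i) ^ 2 ≤ (k + 1) * M := by
      apply Finset.exists_le_of_sum_le Finset.univ_nonempty
      rw [h1]
      simp only [Finset.sum_const, Finset.card_univ, nsmul_eq_mul]
      have : (Fintype.card G : ℝ) * ∑ i, e i ^ 2 ≤ Fintype.card G * (k * M) := by gcongr
      linarith
    refine ⟨Fin.cons g u, ?_⟩
    simp only [Fin.sum_univ_succ, Fin.cons_zero, Fin.cons_succ]
    push_cast
    exact hg

/-- Rich sets consist mostly of almost periods. -/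
lemma almost_period (θ : ℝ) (hθ : 0 < θ) : ∃ ε : ℝ, 0 < ε ∧
    ∀ (G : Type) [Group G] [Fintype G] (A : Finset G), RichIn A ε →
    ∀ (φ : G → G → Bool) (ψ : G → G → ℝ), (∀ u x, 0 ≤ ψ u x) → (∀ u x, ψ u x ≤ 1) →
    ∀ v : G → G → ℝ, (∀ t x, v t x = ∑ u, (if φ t u then 1 else 0) * ψ u x) →
    (∀ a b, ∑ x, |v (a * b) x - v b x| = ∑ x, |v a x - v 1 x|) →
    ∑ t ∈ A, ∑ x, |v t x - v 1 x| ≤ θ * (Fintype.card G : ℝ) ^ 3 := by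
  classical
  set ρ := θ / 6 with hρ
  have hρ0 : 0 < ρ := by positivity
  obtain ⟨m, hm⟩ := exists_nat_gt (3 / (ρ * θ))
  have hm0 : (0 : ℝ) < m := lt_trans (by positivity) hm
  set k := m ^ 2 with hk
  have hk0 : (0 : ℝ) < k := by rw [hk]; push_cast; positivity
  refine ⟨θ / (3 * 2 ^ k), by positivity, ?_⟩
  intro G _ _ A hA φ ψ hψ0 hψ1 v hv hinv
  set N : ℝ := (Fintype.card G : ℝ) with hN
  have hN0 : 0 < N := by rw [hN]; exact_mod_cast Fintype.card_pos
  set X : G → G → G → ℝ := fun u t x => (if φ t u then 1 else 0) * ψ u x with hX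
  have hX0 : ∀ u t x, 0 ≤ X u t x := by
    intro u t x; simp only [hX]; split_ifs <;> simp [hψ0]
  have hX1 : ∀ u t x, X u t x ≤ 1 := by
    intro u t x; simp only [hX]; split_ifs <;> simp [hψ1]
  have hvX : ∀ t x, v t x = ∑ u, X u t x := hv
  have hv0 : ∀ t x, 0 ≤ v t x := fun t x => by
    rw [hvX]; exact Finset.sum_nonneg fun u _ => hX0 u t x
  have hvN : ∀ t x, v t x ≤ N := fun t x => by
    rw [hvX]
    calc _ ≤ ∑ u : G, (1 : ℝ) := Finset.sum_le_sum fun u _ => hX1 u t x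
      _ = N := by simp [hN]
  obtain ⟨u, hu⟩ := maurey (G := G) (ι := G × G) (fun u p => v p.1 p.2 - N * X u p.1 p.2)
    (by intro p; simp [Finset.sum_sub_distrib, ← Finset.mul_sum, ← hvX, hN]) (N ^ 4)
    (by
      rw [Finset.sum_comm]
      have : ∀ p : G × G, ∑ u, (v p.1 p.2 - N * X u p.1 p.2) ^ 2 ≤ N ^ 3 := by
        intro p
        have e1 : ∀ u, (v p.1 p.2 - N * X u p.1 p.2) ^ 2
            = v p.1 p.2 ^ 2 - (2 * N * v p.1 p.2) * X u p.1 p.2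
              + N ^ 2 * (X u p.1 p.2) ^ 2 := by intro; ring
        simp only [e1, Finset.sum_add_distrib, Finset.sum_sub_distrib, ← Finset.mul_sum, ← hvX]
        have e2 : ∑ u, (X u p.1 p.2) ^ 2 ≤ N := by
          calc _ ≤ ∑ u : G, (1 : ℝ) := Finset.sum_le_sum fun u _ =>
                pow_le_one₀ (hX0 _ _ _) (hX1 _ _ _)
            _ = N := by simp [hN]
        simp only [Finset.sum_const, Finset.card_univ, nsmul_eq_mul, ← hN]
        have e3 : N ^ 2 * ∑ u, (X u p.1 p.2) ^ 2 ≤ N ^ 2 * N := by gcongr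
        have e4 : 0 ≤ N * v p.1 p.2 ^ 2 := by positivity
        nlinarith
      calc _ ≤ ∑ p : G × G, N ^ 3 := Finset.sum_le_sum fun p _ => this p
        _ = N ^ 4 * N := by simp [← hN]; ring) k
  set e : G → ℝ := fun t => ∑ x, |∑ j, (v t x - N * X (u j) t x)| with he
  have he0 : ∀ t, 0 ≤ e t := fun t => Finset.sum_nonneg fun _ _ => abs_nonneg _
  have hesum : ∑ t, e t ≤ m * N ^ 3 := by
    have h1 : ∑ t, e t = ∑ p : G × G, |∑ j, (v p.1 p.2 - N * X (u j) p.1 p.2)| := by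
      rw [Fintype.sum_prod_type]
    have h2 := sq_sum_le_card_mul_sum_sq (s := (Finset.univ : Finset (G × G)))
      (f := fun p => |∑ j, (v p.1 p.2 - N * X (u j) p.1 p.2)|)
    rw [← h1] at h2
    simp only [sq_abs, Finset.card_univ, Fintype.card_prod, Nat.cast_mul, ← hN] at h2
    refine abs_le_of_sq_le_sq' ?_ (by positivity) |>.2
    refine h2.trans ?_
    have : N * N * ∑ p : G × G, (∑ j, (v p.1 p.2 - N * X (u j) p.1 p.2)) ^ 2
        ≤ N * N * (k * N ^ 4) := by gcongr
    refine this.trans (le_of_eq ?_)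
    rw [hk]; push_cast; ring
  set D : G → ℝ := fun t => ∑ x, |v t x - v 1 x| with hD
  have hDN : ∀ t, D t ≤ N ^ 2 := by
    intro t
    calc _ ≤ ∑ x : G, N := Finset.sum_le_sum fun x _ => by
          rw [abs_le]; constructor <;> linarith [hv0 t x, hv0 1 x, hvN t x, hvN 1 x]
      _ = N ^ 2 := by simp [← hN]; ring
  set Bad := A.filter (fun t => e t ≤ k * ρ * N ^ 2 ∧ 2 * ρ * N ^ 2 < D t) with hBad
  have hclose : ∀ s t, (∀ j, φ s (u j) = φ t (u j)) → e s ≤ k * ρ * N ^ 2 →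
      e t ≤ k * ρ * N ^ 2 → ∑ x, |v s x - v t x| ≤ 2 * ρ * N ^ 2 := by
    intro s t hst hs ht
    have h1 : k * ∑ x, |v s x - v t x| ≤ e s + e t := by
      simp only [he]
      rw [← Finset.sum_add_distrib, Finset.mul_sum]
      refine Finset.sum_le_sum fun x _ => ?_
      have h2 : (k : ℝ) * (v s x - v t x) = (∑ j, (v s x - N * X (u j) s x))
          - ∑ j, (v t x - N * X (u j) t x) := by
        have : ∀ j, X (u j) s x = X (u j) t x := by intro j; simp only [hX, hst j]
        simp only [this, Finset.sum_sub_distrib]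
        simp; ring
      rw [← abs_of_pos hk0, ← abs_mul, h2]
      exact abs_sub _ _
    have h3 : k * ∑ x, |v s x - v t x| ≤ k * (2 * ρ * N ^ 2) := by linarith
    exact le_of_mul_le_mul_left h3 hk0
  have hBadcard : (Bad.card : ℝ) ≤ θ / 3 * N := by
    have h1 : Bad.card = ∑ σ : Fin k → Bool,
        (Bad.filter (fun t => (fun j => φ t (u j)) = σ)).card :=
      Finset.card_eq_sum_card_fiberwise (fun _ _ => Finset.mem_coe.2 (Finset.mem_univ _))
    rw [h1]; push_cast
    have h2 : ∀ σ : Fin k → Bool,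
        ((Bad.filter (fun t => (fun j => φ t (u j)) = σ)).card : ℝ) ≤ θ / (3 * 2 ^ k) * N := by
      intro σ
      by_contra! hcon
      obtain ⟨x, hx, y, hy, hxy⟩ := hA (Bad.filter (fun t => (fun j => φ t (u j)) = σ))
        ((Finset.filter_subset _ _).trans (Finset.filter_subset _ _)) hcon.le
      simp only [hBad, Finset.mem_filter] at hx hy hxy
      have := hclose (x * y) y (fun j => by
        have := congrFun (hxy.2.trans hy.2.symm) j; simpa using this) hxy.1.2.1 hy.1.2.1
      rw [hinv] at this
      exact absurd hx.1.2.2 (not_lt.2 this)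
    calc _ ≤ ∑ σ : Fin k → Bool, θ / (3 * 2 ^ k) * N := Finset.sum_le_sum fun σ _ => h2 σ
      _ = θ / 3 * N := by simp; field_simp
  have hpt : ∀ t ∈ A, D t ≤ 2 * ρ * N ^ 2 + e t / (k * ρ) + N ^ 2 * (if t ∈ Bad then 1 else 0) := by
    intro t ht
    have hq : 0 ≤ e t / (k * ρ) := div_nonneg (he0 t) (by positivity)
    have hr : 0 ≤ 2 * ρ * N ^ 2 := by positivity
    have hs : 0 ≤ N ^ 2 * (if t ∈ Bad then (1 : ℝ) else 0) := by positivity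
    by_cases h1 : e t ≤ k * ρ * N ^ 2
    · by_cases h2 : 2 * ρ * N ^ 2 < D t
      · have : t ∈ Bad := by simp only [hBad, Finset.mem_filter]; exact ⟨ht, h1, h2⟩
        simp only [this, if_true]
        linarith [hDN t]
      · linarith
    · have : N ^ 2 ≤ e t / (k * ρ) := by
        rw [le_div_iff₀ (by positivity)]; linarith
      linarith [hDN t]
  have hfin : ∑ t ∈ A, D t ≤ 2 * ρ * N ^ 2 * N + m * N ^ 3 / (k * ρ) + N ^ 2 * (θ / 3 * N) := by
    calc _ ≤ ∑ t ∈ A, (2 * ρ * N ^ 2 + e t / (k * ρ) + N ^ 2 * (if t ∈ Bad then 1 else 0)) :=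
          Finset.sum_le_sum hpt
      _ ≤ ∑ t, (2 * ρ * N ^ 2 + e t / (k * ρ) + N ^ 2 * (if t ∈ Bad then 1 else 0)) := by
          apply Finset.sum_le_sum_of_subset_of_nonneg (Finset.subset_univ _)
          intro t _ _
          have hq : 0 ≤ e t / (k * ρ) := div_nonneg (he0 t) (by positivity)
          positivity
      _ = 2 * ρ * N ^ 2 * N + (∑ t, e t) / (k * ρ) + N ^ 2 * Bad.card := by
          rw [Finset.sum_add_distrib, Finset.sum_add_distrib, ← Finset.sum_div, ← Finset.mul_sum]
          simp [← hN]; ring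
      _ ≤ _ := by gcongr
  refine hfin.trans ?_
  have h5 : m * N ^ 3 / (k * ρ) ≤ θ / 3 * N ^ 3 := by
    rw [div_le_iff₀ (by positivity), hk]
    push_cast
    rw [div_lt_iff₀ (by positivity)] at hm
    have : m * N ^ 3 * 3 ≤ m * N ^ 3 * (m * (ρ * θ)) := by gcongr
    nlinarith
  rw [hρ] at h5 ⊢
  nlinarith

lemma almost_period_trans (θ : ℝ) (hθ : 0 < θ) : ∃ ε : ℝ, 0 < ε ∧
    ∀ (G : Type) [Group G] [Fintype G] (A : Finset G), RichIn A ε →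
    ∀ (φ : G → G → Bool) (ψ : G → G → ℝ), (∀ u x, 0 ≤ ψ u x) → (∀ u x, ψ u x ≤ 1) →
    ∀ f : G → ℝ, (∀ t x, f (t * x) = ∑ u, (if φ t u then 1 else 0) * ψ u x) →
    ∑ t ∈ A, ∑ x, |f (t * x) - f x| ≤ θ * (Fintype.card G : ℝ) ^ 3 := by
  obtain ⟨ε, hε, h⟩ := almost_period θ hθ
  refine ⟨ε, hε, ?_⟩
  intro G _ _ A hA φ ψ h0 h1 f hf
  have := h G A hA φ ψ h0 h1 (fun t x => f (t * x)) hf (by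
    intro a b
    simp only [one_mul, mul_assoc]
    exact Equiv.sum_comp (Equiv.mulLeft b) (fun x => |f (a * x) - f x|))
  simpa using this

lemma triple_arith {δ N a b c T E W W1 : ℝ} (hδ : 0 < δ) (hN0 : 0 < N) (ha : 0 ≤ a) (hb : 0 ≤ b)
    (hc : 0 ≤ c) (cA : a ≤ N) (cB : b ≤ N) (cC : c ≤ N) (dC : δ * N ≤ c) (hT0 : 0 ≤ T)
    (hE4 : δ ^ 4 * N ^ 3 ≤ E) (S1 : W - δ ^ 5 / 6 * N ^ 3 ≤ a * T)
    (S2 : c * W1 - δ ^ 5 / 6 * N ^ 3 ≤ W) (S3 : E - δ ^ 5 / 6 * N ^ 3 ≤ b * W1) :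
    δ ^ 5 / 2 * N ^ 2 ≤ T := by
  have F1 : c * W1 - 2 * (δ ^ 5 / 6 * N ^ 3) ≤ a * T := by linarith
  have F2 : b * (c * W1 - 2 * (δ ^ 5 / 6 * N ^ 3)) ≤ b * (a * T) :=
    mul_le_mul_of_nonneg_left F1 hb
  have F3 : c * (E - δ ^ 5 / 6 * N ^ 3) ≤ c * (b * W1) := mul_le_mul_of_nonneg_left S3 hc
  have hθ0 : 0 ≤ δ ^ 5 / 6 * N ^ 3 := by positivity
  have F4 := mul_le_mul_of_nonneg_right cB hθ0
  have F5 := mul_le_mul_of_nonneg_right cC hθ0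
  have F6 : δ * N * (δ ^ 4 * N ^ 3) ≤ c * E := by
    apply mul_le_mul dC hE4 (by positivity) hc
  have F7 : b * (a * T) ≤ N * (N * T) := by gcongr
  have F8 : N ^ 2 * (δ ^ 5 / 2 * N ^ 2) ≤ N ^ 2 * T := by
    nlinarith
  exact le_of_mul_le_mul_left F8 (by positivity)

lemma sum_swap {G : Type} [Group G] [Fintype G] (α β γ : G → ℝ) :
    ∑ t, γ t * ∑ u, α (t * u) * β u⁻¹ = ∑ a, α a * ∑ b, β b * γ (a * b) := by
  simp only [Finset.mul_sum]
  rw [Finset.sum_comm, ← Equiv.sum_comp (Equiv.inv G)]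
  conv_rhs => rw [Finset.sum_comm]
  refine Finset.sum_congr rfl fun b _ => ?_
  rw [← Equiv.sum_comp (Equiv.mulRight b)]
  refine Finset.sum_congr rfl fun a _ => ?_
  simp
  ring

set_option maxHeartbeats 1000000 in
lemma triple (δ : ℝ) (hδ : 0 < δ) : ∃ ε : ℝ, 0 < ε ∧
    ∀ (G : Type) [Group G] [Fintype G] (A B C : Finset G),
    RichIn A ε → RichIn B ε → RichIn C ε →
    δ * Fintype.card G ≤ A.card → δ * Fintype.card G ≤ B.card → δ * Fintype.card G ≤ C.card →
    ∀ α β γ : G → ℝ, (∀ x, (x ∈ A → α x = 1) ∧ (x ∉ A → α x = 0)) →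
      (∀ x, (x ∈ B → β x = 1) ∧ (x ∉ B → β x = 0)) →
      (∀ x, (x ∈ C → γ x = 1) ∧ (x ∉ C → γ x = 0)) →
    δ ^ 5 / 2 * (Fintype.card G : ℝ) ^ 2 ≤ ∑ t ∈ C, ∑ u, α (t * u) * β u⁻¹ := by
  classical
  set θ := δ ^ 5 / 6 with hθ
  obtain ⟨ε, hε, h⟩ := almost_period_trans θ (by positivity)
  refine ⟨ε, hε, ?_⟩
  intro G _ _ A B C rA rB rC dA dB dC α β γ hα hβ hγ
  have hαI : ∀ x, α x = if decide (x ∈ A) then 1 else 0 := by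
    intro x; by_cases hx : x ∈ A <;> simp [hx, hα]
  have hα0 : ∀ x, 0 ≤ α x := by intro x; rw [hαI]; positivity
  have hα1 : ∀ x, α x ≤ 1 := by intro x; rw [hαI]; split_ifs <;> norm_num
  have hβI : ∀ x, β x = if x ∈ B then 1 else 0 := by
    intro x; by_cases hx : x ∈ B <;> simp [hx, hβ]
  have hβ0 : ∀ x, 0 ≤ β x := by intro x; rw [hβI]; positivity
  have hβ1 : ∀ x, β x ≤ 1 := by intro x; rw [hβI]; split_ifs <;> norm_num
  have sA : ∀ F : G → ℝ, ∑ x ∈ A, F x = ∑ x, α x * F x := by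
    intro F; simp [hαI]
  have sB : ∀ F : G → ℝ, ∑ x ∈ B, F x = ∑ x, β x * F x := by
    intro F; simp [hβI]
  set N : ℝ := (Fintype.card G : ℝ) with hN
  have hN0 : 0 < N := by rw [hN]; exact_mod_cast Fintype.card_pos
  have cA : (A.card : ℝ) ≤ N := by rw [hN]; exact_mod_cast Finset.card_le_univ A
  have cB : (B.card : ℝ) ≤ N := by rw [hN]; exact_mod_cast Finset.card_le_univ B
  have cC : (C.card : ℝ) ≤ N := by rw [hN]; exact_mod_cast Finset.card_le_univ C
  set w : G → ℝ := fun t => ∑ u, α (t * u) * β u⁻¹ with hw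
  set p : G → ℝ := fun x => ∑ g, α g * α (g * x) with hp
  -- almost invariance of `w` under `A`
  have I1 : ∑ t ∈ A, ∑ x, |w (t * x) - w x| ≤ θ * N ^ 3 := by
    refine h G A rA (fun t u => decide (t * u ∈ A)) (fun u x => β (u⁻¹ * x))
      (fun _ _ => hβ0 _) (fun _ _ => hβ1 _) w ?_
    intro t x
    simp only [← hαI, hw]
    rw [← Equiv.sum_comp (Equiv.mulLeft x) (fun u => α (t * u) * β (u⁻¹ * x))]
    simp [mul_assoc]
  have hpinv : ∀ t x, p (t * x) = ∑ u, (if decide (u * t⁻¹ ∈ A) then 1 else 0) * α (u * x) := by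
    intro t x
    simp only [← hαI, hp]
    rw [← Equiv.sum_comp (Equiv.mulRight t) (fun u => α (u * t⁻¹) * α (u * x))]
    simp [mul_assoc]
  have I2 : ∑ t ∈ C, ∑ x, |p (t * x) - p x| ≤ θ * N ^ 3 :=
    h G C rC (fun t u => decide (u * t⁻¹ ∈ A)) (fun u x => α (u * x))
      (fun _ _ => hα0 _) (fun _ _ => hα1 _) p hpinv
  have I3 : ∑ t ∈ B, ∑ x, |p (t * x) - p x| ≤ θ * N ^ 3 :=
    h G B rB (fun t u => decide (u * t⁻¹ ∈ A)) (fun u x => α (u * x))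
      (fun _ _ => hα0 _) (fun _ _ => hα1 _) p hpinv
  set wA : G → ℝ := fun t => ∑ a ∈ A, w (a * t) with hwA
  have wA_eq : ∀ t, wA t = ∑ u, p (t * u) * β u⁻¹ := by
    intro t
    simp only [hwA, hw, hp, sA, Finset.mul_sum, Finset.sum_mul]
    rw [Finset.sum_comm]
    simp only [mul_assoc]
  -- step 1
  have S1 : ∑ t ∈ C, wA t - θ * N ^ 3 ≤ A.card * ∑ t ∈ C, w t := by
    have : ∑ t ∈ C, wA t - A.card * ∑ t ∈ C, w t = ∑ a ∈ A, ∑ t ∈ C, (w (a * t) - w t) := by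
      simp only [hwA, Finset.sum_sub_distrib]
      rw [Finset.sum_comm]; simp
    have h2 : ∑ a ∈ A, ∑ t ∈ C, (w (a * t) - w t) ≤ ∑ t ∈ A, ∑ x, |w (t * x) - w x| := by
      refine Finset.sum_le_sum fun a _ => ?_
      exact (Finset.sum_le_sum fun t _ => le_abs_self _).trans
        (Finset.sum_le_sum_of_subset_of_nonneg (Finset.subset_univ _) fun _ _ _ => abs_nonneg _)
    linarith
  -- step 2
  have S2 : C.card * wA 1 - θ * N ^ 3 ≤ ∑ t ∈ C, wA t := by
    have h1 : C.card * wA 1 - ∑ t ∈ C, wA t = ∑ t ∈ C, (wA 1 - wA t) := by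
      simp [Finset.sum_sub_distrib]
    have h2 : ∑ t ∈ C, (wA 1 - wA t) ≤ ∑ t ∈ C, ∑ x, |p (t * x) - p x| := by
      refine Finset.sum_le_sum fun t _ => ?_
      rw [wA_eq, wA_eq, ← Finset.sum_sub_distrib]
      refine Finset.sum_le_sum fun u _ => ?_
      rw [one_mul, ← sub_mul, abs_sub_comm]
      calc _ ≤ |p u - p (t * u)| * β u⁻¹ := by gcongr; exacts [hβ0 _, le_abs_self _]
        _ ≤ |p u - p (t * u)| * 1 := by gcongr; exact hβ1 _
        _ = _ := mul_one _
    linarith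
  have psymm : ∀ x, p x⁻¹ = p x := by
    intro x
    simp only [hp]
    rw [← Equiv.sum_comp (Equiv.mulRight x) (fun g => α g * α (g * x⁻¹))]
    simp [mul_comm]
  have wA_one : wA 1 = ∑ b ∈ B, p b := by
    rw [wA_eq, sB, ← Equiv.sum_comp (Equiv.inv G)]
    simp [psymm, mul_comm]
  -- step 3
  set E : ℝ := ∑ b ∈ B, ∑ b2 ∈ B, p (b⁻¹ * b2) with hE
  have S3 : E - θ * N ^ 3 ≤ B.card * ∑ b ∈ B, p b := by
    have h1 : E - B.card * ∑ b ∈ B, p b = ∑ b ∈ B, ∑ b2 ∈ B, (p (b⁻¹ * b2) - p b2) := by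
      simp [hE, Finset.sum_sub_distrib]
    have h2 : ∑ b ∈ B, ∑ b2 ∈ B, (p (b⁻¹ * b2) - p b2) ≤ ∑ t ∈ B, ∑ x, |p (t * x) - p x| := by
      refine Finset.sum_le_sum fun b _ => ?_
      calc _ ≤ ∑ b2 ∈ B, |p (b⁻¹ * b2) - p b2| := Finset.sum_le_sum fun t _ => le_abs_self _
        _ ≤ ∑ b2, |p (b⁻¹ * b2) - p b2| :=
          Finset.sum_le_sum_of_subset_of_nonneg (Finset.subset_univ _) fun _ _ _ => abs_nonneg _
        _ = _ := by
          rw [← Equiv.sum_comp (Equiv.mulLeft b)]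
          simp [abs_sub_comm]
    linarith
  have hEE : E = ∑ g, (∑ b ∈ B, α (g * b)) ^ 2 := by
    have h1 : ∀ b b2, p (b⁻¹ * b2) = ∑ g, α (g * b) * α (g * b2) := by
      intro b b2
      simp only [hp]
      rw [← Equiv.sum_comp (Equiv.mulRight b)]
      simp [mul_assoc]
    simp only [hE, h1, sq, Finset.sum_mul_sum]
    rw [Finset.sum_comm]
    conv_rhs => rw [Finset.sum_comm]
    rw [Finset.sum_comm]
    refine Finset.sum_congr rfl fun b _ => ?_
    rw [Finset.sum_comm]
  have hE4 : δ ^ 4 * N ^ 3 ≤ E := by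
    have h1 : ∑ g, ∑ b ∈ B, α (g * b) = B.card * A.card := by
      rw [Finset.sum_comm]
      have : ∀ b, ∑ g, α (g * b) = A.card := by
        intro b
        refine (Equiv.sum_comp (Equiv.mulRight b) α).trans ?_
        simp [hαI]
      simp [this]
    have h2 := sq_sum_le_card_mul_sum_sq (s := (Finset.univ : Finset G))
      (f := fun g => ∑ b ∈ B, α (g * b))
    rw [h1, ← hEE, Finset.card_univ, ← hN] at h2
    have h3 : (δ * N * (δ * N)) ^ 2 ≤ (B.card * A.card : ℝ) ^ 2 := by gcongr
    have h4 : N * (δ ^ 4 * N ^ 3) ≤ N * E := by nlinarith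
    exact le_of_mul_le_mul_left h4 hN0
  rw [← wA_one] at S3
  set T := ∑ t ∈ C, w t with hT
  have hw0 : ∀ t, 0 ≤ w t := fun t => Finset.sum_nonneg fun u _ => mul_nonneg (hα0 _) (hβ0 _)
  have hT0 : 0 ≤ T := Finset.sum_nonneg fun t _ => hw0 t
  exact triple_arith hδ hN0 (by positivity) (by positivity) (by positivity) cA cB cC dC hT0 hE4 (hθ ▸ S1) (hθ ▸ S2) (hθ ▸ S3)

lemma few_bad_s10 (δ : ℝ) (hδ : 0 < δ) : ∃ ε : ℝ, 0 < ε ∧ ∃ c : ℝ, 0 < c ∧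
    ∀ (G : Type) [Group G] [Fintype G] [DecidableEq G] (A B C : Finset G),
    RichIn A ε → RichIn B ε → RichIn C ε →
    δ * Fintype.card G ≤ B.card → δ * Fintype.card G ≤ C.card →
    ((A.filter (fun x => ((B.filter (fun y => x * y ∈ C)).card : ℝ) < c * Fintype.card G)).card : ℝ)
      ≤ δ * Fintype.card G := by
  obtain ⟨ε, hε, h⟩ := triple δ hδ
  refine ⟨ε, hε, δ ^ 5 / 2, by positivity, ?_⟩
  intro G _ _ _ A B C rA rB rC dB dC
  by_contra! hcon
  set A₀ := A.filter (fun x =>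
    ((B.filter (fun y => x * y ∈ C)).card : ℝ) < δ ^ 5 / 2 * Fintype.card G) with hA₀
  have key := h G A₀ B C (rA.mono (Finset.filter_subset _ _) le_rfl) rB rC hcon.le dB dC
    (fun x => if x ∈ A₀ then 1 else 0) (fun x => if x ∈ B then 1 else 0)
    (fun x => if x ∈ C then 1 else 0) (by intro x; simp +contextual)
    (by intro x; simp +contextual) (by intro x; simp +contextual)
  have hN0 : (0 : ℝ) < Fintype.card G := by exact_mod_cast Fintype.card_pos
  have e1 : ∑ t ∈ C, ∑ u : G, (if t * u ∈ A₀ then (1 : ℝ) else 0) * (if u⁻¹ ∈ B then 1 else 0)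
      = ∑ a ∈ A₀, ((B.filter (fun y => a * y ∈ C)).card : ℝ) := by
    have := sum_swap (fun x => if x ∈ A₀ then (1 : ℝ) else 0) (fun x => if x ∈ B then (1 : ℝ) else 0)
      (fun x => if x ∈ C then (1 : ℝ) else 0)
    have e2 : ∀ (S : Finset G) (f : G → ℝ), ∑ x, (if x ∈ S then (1 : ℝ) else 0) * f x
        = ∑ x ∈ S, f x := by
      intro S f; simp
    rw [e2 C, e2 A₀] at this
    rw [this]
    refine Finset.sum_congr rfl fun a _ => ?_
    rw [e2 B, Finset.card_filter]
    push_cast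
    rfl
  rw [e1] at key
  have hne : A₀.Nonempty := by
    rw [← Finset.card_pos]
    have : (0 : ℝ) < A₀.card := lt_trans (by positivity) hcon
    exact_mod_cast this
  have : ∑ a ∈ A₀, ((B.filter (fun y => a * y ∈ C)).card : ℝ)
      < ∑ a ∈ A₀, δ ^ 5 / 2 * Fintype.card G :=
    Finset.sum_lt_sum_of_nonempty hne fun a ha => (Finset.mem_filter.1 ha).2
  simp only [Finset.sum_const, nsmul_eq_mul] at this
  have h3 : (A₀.card : ℝ) ≤ Fintype.card G := by exact_mod_cast Finset.card_le_univ A₀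
  have h4 : (A₀.card : ℝ) * (δ ^ 5 / 2 * Fintype.card G)
      ≤ Fintype.card G * (δ ^ 5 / 2 * Fintype.card G) := by gcongr
  nlinarith

lemma prodF_map_succ {G : Type} [Group G] {n : ℕ} (x : G) (a : Fin n → G) (F : Finset (Fin n)) :
    prodF (Fin.cons x a : Fin (n + 1) → G) (F.map (Fin.succEmb n)) = prodF a F := by
  unfold prodF
  rw [← Finset.map_sort (r := (· ≤ ·)) (f := Fin.succEmb n)]
  · rw [List.map_map]
    congr 1
  · intro i _ j _
    simp

lemma prodF_insert_zero {G : Type} [Group G] {n : ℕ} (x : G) (a : Fin n → G) (F : Finset (Fin n)) :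
    prodF (Fin.cons x a : Fin (n + 1) → G) (insert 0 (F.map (Fin.succEmb n))) = x * prodF a F := by
  rw [← prodF_map_succ x a F]
  unfold prodF
  rw [Finset.sort_insert]
  · simp
  · intro b _; exact Fin.zero_le b
  · simp [Fin.succ_ne_zero]

lemma fin_succ_cases {n : ℕ} (F : Finset (Fin (n + 1))) :
    ∃ F2 : Finset (Fin n), F = F2.map (Fin.succEmb n) ∨ F = insert 0 (F2.map (Fin.succEmb n)) := by
  refine ⟨Finset.univ.filter (fun i => i.succ ∈ F), ?_⟩
  by_cases h : (0 : Fin (n + 1)) ∈ F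
  · right
    ext i
    refine Fin.cases ?_ (fun j => ?_) i <;> simp [h, Fin.succ_ne_zero]
  · left
    ext i
    refine Fin.cases ?_ (fun j => ?_) i <;> simp [h, Fin.succ_ne_zero]

lemma main_induction (n : ℕ) : ∀ δ : ℝ, 0 < δ → ∃ ε : ℝ, 0 < ε ∧ ∃ η : ℝ, 0 < η ∧
    ∀ (G : Type) [Group G] [Fintype G] [DecidableEq G] (A : Finset (Fin n) → Finset G),
      (∀ F : Finset (Fin n), F.Nonempty → δ * Fintype.card G ≤ (A F).card) →
      (∀ F : Finset (Fin n), F.Nonempty → RichIn (A F) ε) →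
      η * (Fintype.card G : ℝ) ^ n ≤
        (Nat.card {a : Fin n → G //
          ∀ F : Finset (Fin n), F.Nonempty → prodF a F ∈ A F} : ℝ) := by
  induction n with
  | zero =>
    intro δ hδ
    refine ⟨1, one_pos, 1, one_pos, ?_⟩
    intro G _ _ _ A _ _
    have : Nonempty {a : Fin 0 → G // ∀ F : Finset (Fin 0), F.Nonempty → prodF a F ∈ A F} :=
      ⟨⟨fun i => i.elim0, fun F hF => hF.elim fun i _ => i.elim0⟩⟩
    have h : 0 < Nat.card {a : Fin 0 → G // ∀ F : Finset (Fin 0), F.Nonempty → prodF a F ∈ A F} :=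
      Nat.card_pos
    simp only [pow_zero, mul_one]
    exact_mod_cast h
  | succ n ih =>
    intro δ hδ
    set δ2 := δ / (2 * 2 ^ n) with hδ2
    have hδ2_pos : 0 < δ2 := by positivity
    have hδδ : δ2 ≤ δ := by
      apply div_le_self hδ.le
      have : (1 : ℝ) ≤ 2 ^ n := one_le_pow₀ (by norm_num)
      linarith
    obtain ⟨ε₁, hε₁, c, hc, h1⟩ := few_bad_s10 δ2 hδ2_pos
    obtain ⟨ε₂, hε₂, η, hη, h2⟩ := ih c hc
    refine ⟨min ε₁ ε₂, lt_min hε₁ hε₂, δ / 2 * η, by positivity, ?_⟩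
    intro G _ _ _ A dA rA
    set N : ℝ := (Fintype.card G : ℝ) with hN
    have hN0 : 0 < N := by rw [hN]; exact_mod_cast Fintype.card_pos
    let P : Finset (Fin n) → Finset G := fun F => A (F.map (Fin.succEmb n))
    let Q : Finset (Fin n) → Finset G := fun F => A (insert 0 (F.map (Fin.succEmb n)))
    let Bad : Finset (Fin n) → Finset G := fun F =>
      (A {0}).filter (fun x => (((P F).filter (fun y => x * y ∈ Q F)).card : ℝ) < c * N)
    let S := Finset.univ.filter (fun F : Finset (Fin n) => F.Nonempty)
    let Good : Finset G := A {0} \ S.biUnion Bad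
    have hbad : ∀ F ∈ S, ((Bad F).card : ℝ) ≤ δ2 * N := by
      intro F hF
      have hF : F.Nonempty := (Finset.mem_filter.1 hF).2
      refine h1 G (A {0}) (P F) (Q F) ?_ ?_ ?_ ?_ ?_
      · exact (rA _ (by simp)).mono subset_rfl (min_le_left _ _)
      · exact (rA _ (by simpa using hF)).mono subset_rfl (min_le_left _ _)
      · exact (rA _ (by simp)).mono subset_rfl (min_le_left _ _)
      · refine le_trans ?_ (dA _ (by simpa using hF)); gcongr
      · refine le_trans ?_ (dA _ (by simp)); gcongr
    have hgood : δ / 2 * N ≤ Good.card := by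
      have e1 : ((S.biUnion Bad).card : ℝ) ≤ δ / 2 * N := by
        calc ((S.biUnion Bad).card : ℝ) ≤ ∑ F ∈ S, ((Bad F).card : ℝ) := by
              exact_mod_cast Finset.card_biUnion_le
          _ ≤ ∑ F ∈ S, δ2 * N := Finset.sum_le_sum hbad
          _ ≤ 2 ^ n * (δ2 * N) := by
              rw [Finset.sum_const, nsmul_eq_mul]
              have : S.card ≤ 2 ^ n := by
                refine (Finset.card_le_univ S).trans (by simp)
              have : (S.card : ℝ) ≤ 2 ^ n := by exact_mod_cast this
              gcongr
          _ = δ / 2 * N := by rw [hδ2]; field_simp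
      have e2 : (A {0}).card ≤ Good.card + (S.biUnion Bad).card := by
        have := Finset.le_card_sdiff (S.biUnion Bad) (A {0})
        show _ ≤ (A {0} \ S.biUnion Bad).card + _
        omega
      have e3 : ((A {0}).card : ℝ) ≤ Good.card + (S.biUnion Bad).card := by exact_mod_cast e2
      have e4 := dA {0} (by simp)
      linarith
    let R : G → Finset (Fin n) → Finset G := fun x F => (P F).filter (fun y => x * y ∈ Q F)
    have htail : ∀ x ∈ Good, η * N ^ n ≤
        (Nat.card {a : Fin n → G // ∀ F : Finset (Fin n), F.Nonempty → prodF a F ∈ R x F} : ℝ) := by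
      intro x hx
      refine h2 G (R x) ?_ ?_
      · intro F hF
        by_contra! hcon
        have hx2 := Finset.mem_sdiff.1 hx
        refine hx2.2 (Finset.mem_biUnion.2 ⟨F, by simp [S, hF], ?_⟩)
        exact Finset.mem_filter.2 ⟨hx2.1, hcon⟩
      · intro F hF
        exact (rA _ (by simpa using hF)).mono (Finset.filter_subset _ _) (min_le_right _ _)
    let inj : (Σ x : Good, {a : Fin n → G // ∀ F : Finset (Fin n), F.Nonempty →
        prodF a F ∈ R x F}) → {a : Fin (n + 1) → G //
          ∀ F : Finset (Fin (n + 1)), F.Nonempty → prodF a F ∈ A F} := fun s =>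
      ⟨Fin.cons s.1.1 s.2.1, by
        intro F hF
        obtain ⟨F2, rfl | rfl⟩ := fin_succ_cases F
        · have hF2 : F2.Nonempty := by simpa using hF
          rw [prodF_map_succ]
          exact (Finset.mem_filter.1 (s.2.2 F2 hF2)).1
        · rw [prodF_insert_zero]
          rcases F2.eq_empty_or_nonempty with rfl | hF2
          · have := (Finset.mem_sdiff.1 s.1.2).1
            simpa [prodF] using this
          · exact (Finset.mem_filter.1 (s.2.2 F2 hF2)).2⟩
    have hinj : Function.Injective inj := by
      rintro ⟨⟨x, hx⟩, ⟨a, ha⟩⟩ ⟨⟨y, hy⟩, ⟨b, hb⟩⟩ h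
      have h22 : (Fin.cons x a : Fin (n + 1) → G) = Fin.cons y b := congrArg Subtype.val h
      obtain ⟨rfl, rfl⟩ := Fin.cons_inj.1 h22
      rfl
    have hcard := Nat.card_le_card_of_injective inj hinj
    rw [Nat.card_sigma] at hcard
    calc δ / 2 * η * N ^ (n + 1) = (δ / 2 * N) * (η * N ^ n) := by ring
      _ ≤ Good.card * (η * N ^ n) := by gcongr
      _ = ∑ x : Good, η * N ^ n := by simp
      _ ≤ ∑ x : Good, (Nat.card {a : Fin n → G // ∀ F : Finset (Fin n), F.Nonempty →
        prodF a F ∈ R x F} : ℝ) := Finset.sum_le_sum fun x _ => htail x.1 x.2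
      _ ≤ _ := by exact_mod_cast hcard

theorem stmt_10 (n : ℕ) (hn : 2 ≤ n) (δ : Finset (Fin n) → ℝ)
    (hδ : ∀ F : Finset (Fin n), F.Nonempty → 0 < δ F) :
    ∃ ε : ℝ, 0 < ε ∧ ∃ η : ℝ, 0 < η ∧
      ∀ (G : Type) [Group G] [Fintype G] [DecidableEq G],
        ∀ A : Finset (Fin n) → Finset G,
          (∀ F : Finset (Fin n), F.Nonempty → δ F * Fintype.card G ≤ (A F).card) →
          (∀ F : Finset (Fin n), F.Nonempty → ProductRich (A F) ε) →
          η * (Fintype.card G : ℝ) ^ n ≤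
            (Nat.card {a : Fin n → G //
              ∀ F : Finset (Fin n), F.Nonempty → prodF a F ∈ A F} : ℝ) := by
  classical
  obtain ⟨F₀, -, hF₀⟩ := Finset.exists_min_image (Finset.univ : Finset (Finset (Fin n)))
    (fun F => if F.Nonempty then δ F else 1) Finset.univ_nonempty
  set d : ℝ := if F₀.Nonempty then δ F₀ else 1 with hd
  have hd0 : 0 < d := by
    rw [hd]; split_ifs with h
    · exact hδ _ h
    · exact one_pos
  obtain ⟨ε, hε, η, hη, h⟩ := main_induction n d hd0
  refine ⟨ε, hε, η, hη, ?_⟩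
  intro G _ _ _ A dA rA
  refine h G A ?_ ?_
  · intro F hF
    refine le_trans ?_ (dA F hF)
    have := hF₀ F (Finset.mem_univ _)
    rw [if_pos hF] at this
    gcongr
  · intro F hF A₀ h0 hcard
    have : ε * (A F).card ≤ A₀.card := by
      refine le_trans ?_ hcard
      have : ((A F).card : ℝ) ≤ Fintype.card G := by exact_mod_cast Finset.card_le_univ _
      gcongr
    obtain ⟨z, hz⟩ := rA F hF A₀ h0 this
    rw [Finset.mem_inter, Finset.mem_mul] at hz
    obtain ⟨⟨x, hx, y, hy, rfl⟩, hz⟩ := hz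
    exact ⟨x, hx, y, hy, hz⟩
end
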